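/- Let Γ = ℤ^5 ⋊ ℤ/8 where the generator of ℤ/8 acts on ℤ^5 by the matrix [[0,0,0,0,-1],[1,0,0,0,-1],[0,1,0,0,0],[0,0,1,0,0],[0,0,0,1,-1]]. Then H^1(Γ,ℤ) = 0; H^2(Γ,ℤ) ≅ ℤ^2 ⊕ ℤ/8 ⊕ ℤ/4; H^3(Γ,ℤ) ≅ ℤ^2; H^4(Γ,ℤ) ≅ ℤ ⊕ ℤ/8 ⊕ ℤ/4 ⊕ (ℤ/2)^2; H^5(Γ,ℤ) ≅ (ℤ/2)^2; H^i(Γ,ℤ) ≅ (ℤ/8)^2 ⊕ (ℤ/2)^4 for all even i ≥ 6; and H^i(Γ,ℤ) ≅ (ℤ/2)^2 for all odd i ≥ 7. -/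

import Mathlib

open Matrix

namespace Crystal

/-- The lattice `ℤ^n`, written multiplicatively so that it can be a factor of a semidirect
product of groups. -/
abbrev Lat (n : ℕ) : Type := Multiplicative (Fin n → ℤ)

/-- The invertible integer matrix determined by `M` with `M ^ (m + 1) = 1`. -/
def matUnit {n : ℕ} (M : Matrix (Fin n) (Fin n) ℤ) (m : ℕ) (hm : M ^ (m + 1) = 1) :
    (Matrix (Fin n) (Fin n) ℤ)ˣ :=
  ⟨M, M ^ m, by rw [← pow_succ']; exact hm, by rw [← pow_succ]; exact hm⟩

/-- Linear automorphisms of `ℤ^n` as multiplicative automorphisms of the multiplicative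
version of `ℤ^n`. -/
def linToAut (n : ℕ) : ((Fin n → ℤ) ≃ₗ[ℤ] (Fin n → ℤ)) →* MulAut (Lat n) :=
  MonoidHom.mk' (fun e => AddEquiv.toMultiplicative e.toAddEquiv) (fun _ _ => rfl)

/-- An invertible integer matrix acts on the (multiplicative) lattice `ℤ^n` by (left)
matrix-vector multiplication. -/
def glToAut (n : ℕ) : (Matrix (Fin n) (Fin n) ℤ)ˣ →* MulAut (Lat n) :=
  (linToAut n).comp
    ((LinearMap.GeneralLinearGroup.generalLinearEquiv ℤ (Fin n → ℤ)).toMonoidHom.comp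
      (Matrix.GeneralLinearGroup.toLin).toMonoidHom)

/-- The homomorphism from `ℤ/m` (written multiplicatively) to a group `G` sending the
generator `1` to a chosen element `α` satisfying `α ^ m = 1`. -/
def zmodHom {G : Type*} [Group G] (m : ℕ) [NeZero m] (α : G) (hα : α ^ m = 1) :
    Multiplicative (ZMod m) →* G :=
  MonoidHom.mk' (fun g => α ^ (g.toAdd.val)) (by
    intro a b
    show α ^ (ZMod.val (a.toAdd + b.toAdd)) = α ^ (ZMod.val a.toAdd) * α ^ (ZMod.val b.toAdd)
    rw [ZMod.val_add, ← pow_eq_pow_mod _ hα, pow_add])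

/-- The action of `ℤ/q` on the lattice `ℤ^n` in which the generator `1` of `ℤ/q` acts by left
multiplication by the integer matrix `M`; `M` is required to satisfy `M ^ q = 1`. -/
def matAction {n : ℕ} (q : ℕ) [NeZero q] (M : Matrix (Fin n) (Fin n) ℤ)
    (hq : M ^ q = 1) : Multiplicative (ZMod q) →* MulAut (Lat n) :=
  zmodHom q (glToAut n (matUnit M (q - 1) (by
      rwa [Nat.sub_add_cancel (Nat.one_le_iff_ne_zero.2 (NeZero.ne q))])))
    (by
      rw [← map_pow]
      convert map_one (glToAut n)
      ext i j
      rw [Units.val_pow_eq_pow_val]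
      simp [matUnit, hq])

/-- The crystallographic group `ℤ^n ⋊ ℤ/q` in which the generator `1` of `ℤ/q` acts on the
lattice `ℤ^n` by left multiplication by the integer matrix `M` (with `M ^ q = 1`). -/
abbrev Crys {n : ℕ} (q : ℕ) [NeZero q] (M : Matrix (Fin n) (Fin n) ℤ) (hq : M ^ q = 1) : Type :=
  SemidirectProduct (Lat n) (Multiplicative (ZMod q)) (matAction q M hq)


open CategoryTheory groupCohomology

variable {k : Type} [CommRing k]

lemma comp_contractNth {G H : Type*} [Monoid G] [Monoid H] (f : G →* H) {n : ℕ}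
    (j : Fin (n + 1)) (g : Fin (n + 1) → G) (i : Fin n) :
    f (Fin.contractNth j (· * ·) g i) = Fin.contractNth j (· * ·) (fun l => f (g l)) i := by
  rcases lt_trichotomy (i : ℕ) j with h | h | h
  · rw [Fin.contractNth_apply_of_lt _ _ _ _ h, Fin.contractNth_apply_of_lt _ _ _ _ h]
  · rw [Fin.contractNth_apply_of_eq _ _ _ _ h, Fin.contractNth_apply_of_eq _ _ _ _ h,
      _root_.map_mul]
  · rw [Fin.contractNth_apply_of_gt _ _ _ _ h, Fin.contractNth_apply_of_gt _ _ _ _ h]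

/-- The map of inhomogeneous cochain complexes induced (contravariantly in the group,
covariantly in the coefficients) by a group homomorphism `f : H →* G` together with a
compatible linear map `τ : A → B` of coefficients. -/
def cochainsMap {G H : Type} [Group G] [Group H] (A : Rep k G) (B : Rep k H)
    (f : H →* G) (τ : A →ₗ[k] B)
    (hcomp : ∀ (h : H) (a : A), τ (A.ρ (f h) a) = B.ρ h (τ a)) :
    inhomogeneousCochains A ⟶ inhomogeneousCochains B where
  f n := ModuleCat.ofHom
    { toFun := fun F v => τ (F (fun i => f (v i)))
      map_add' := fun x y => by funext v; simp
      map_smul' := fun r x => by funext v; simp }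
  comm' i j hij := by
    have hij' : i + 1 = j := hij
    subst hij'
    rw [inhomogeneousCochains.d_def, inhomogeneousCochains.d_def]
    ext F v
    show (inhomogeneousCochains.d B i) (fun w => τ (F (fun l => f (w l)))) v
      = τ ((inhomogeneousCochains.d A i) F (fun l => f (v l)))
    simp only [inhomogeneousCochains.d_hom_apply, map_add, map_sum, _root_.map_smul]
    congr 1
    · exact (hcomp (v 0) _).symm
    · refine Finset.sum_congr rfl fun j' _ => ?_
      have hc : (fun l => f (j'.contractNth (· * ·) v l))
          = j'.contractNth (· * ·) (fun l => f (v l)) := by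
        funext l
        exact comp_contractNth f j' v l
      rw [hc]

lemma cochainsMap_eq_id {G : Type} [Group G] (A : Rep k G) (f : G →* G) (τ : A →ₗ[k] A)
    (hcomp : ∀ (h : G) (a : A), τ (A.ρ (f h) a) = A.ρ h (τ a))
    (hf : ∀ x, f x = x) (hτ : ∀ a, τ a = a) :
    cochainsMap A A f τ hcomp = 𝟙 _ := by
  apply HomologicalComplex.Hom.ext
  funext n
  ext F v
  show τ (F (fun i => f (v i))) = F v
  simp only [hf, hτ]

lemma cochainsMap_comp {G H K : Type} [Group G] [Group H] [Group K]
    (A : Rep k G) (B : Rep k H) (C : Rep k K)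
    (f₁ : H →* G) (τ₁ : A →ₗ[k] B) (h₁ : ∀ (h : H) (a : A), τ₁ (A.ρ (f₁ h) a) = B.ρ h (τ₁ a))
    (f₂ : K →* H) (τ₂ : B →ₗ[k] C) (h₂ : ∀ (h : K) (a : B), τ₂ (B.ρ (f₂ h) a) = C.ρ h (τ₂ a))
    (f₃ : K →* G) (τ₃ : A →ₗ[k] C) (h₃ : ∀ (h : K) (a : A), τ₃ (A.ρ (f₃ h) a) = C.ρ h (τ₃ a))
    (hf : ∀ x, f₁ (f₂ x) = f₃ x) (hτ : ∀ a, τ₂ (τ₁ a) = τ₃ a) :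
    cochainsMap A B f₁ τ₁ h₁ ≫ cochainsMap B C f₂ τ₂ h₂ = cochainsMap A C f₃ τ₃ h₃ := by
  apply HomologicalComplex.Hom.ext
  funext n
  ext F v
  show τ₂ (τ₁ (F (fun i => f₁ (f₂ (v i))))) = τ₃ (F (fun i => f₃ (v i)))
  simp only [hf]
  exact hτ _

/-- Given an action `φ` of a group `G` on a group `L` and a representation `ψ` of `G` on a
`k`-module `V`, this is `H^j(L, V)` (with `L` acting trivially on the coefficients `V`),
endowed with the `G`-action functorially induced by the action of `G` on `L` and on `V`:
`g` acts via the conjugation automorphism `φ g⁻¹` of `L` and via `ψ g` on `V`. -/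
noncomputable def cohRep {G L V : Type} [Group G] [Group L] [AddCommGroup V] [Module k V]
    (φ : G →* MulAut L) (ψ : Representation k G V) (j : ℕ) : Rep k G :=
  Rep.of (X := groupCohomology (Rep.trivial k L V) j)
    { toFun := fun g => (HomologicalComplex.homologyMap
        (cochainsMap (Rep.trivial k L V) (Rep.trivial k L V) (φ g⁻¹).toMonoidHom (ψ g)
          (fun _ _ => rfl)) j).hom
      map_one' := by
        have h := cochainsMap_eq_id (Rep.trivial k L V) (φ 1⁻¹).toMonoidHom (ψ 1)
          (fun _ _ => rfl) (fun x => by simp) (fun a => by simp)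
        exact congrArg ModuleCat.Hom.hom
          ((congrArg (fun c => HomologicalComplex.homologyMap c j) h).trans
            (HomologicalComplex.homologyMap_id _ j))
      map_mul' := fun g₁ g₂ => by
        have h := cochainsMap_comp (Rep.trivial k L V) (Rep.trivial k L V) (Rep.trivial k L V)
          (φ g₂⁻¹).toMonoidHom (ψ g₂) (fun _ _ => rfl)
          (φ g₁⁻¹).toMonoidHom (ψ g₁) (fun _ _ => rfl)
          (φ (g₁ * g₂)⁻¹).toMonoidHom (ψ (g₁ * g₂)) (fun _ _ => rfl)
          (fun x => by simp [_root_.mul_inv_rev]) (fun a => by simp)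
        exact congrArg ModuleCat.Hom.hom
          ((congrArg (fun c => HomologicalComplex.homologyMap c j) h.symm).trans
            (HomologicalComplex.homologyMap_comp _ _ j)) }


/-- `H^i(G, H^j(L, ℤ))`: the `i`-th cohomology of the cyclic group `ℤ/q` with coefficients in
the `j`-th cohomology of the lattice `ℤ^n` (with trivial `ℤ` coefficients), where the
`ℤ/q`-action on `H^j(ℤ^n, ℤ)` is the one functorially induced by the matrix action on the
lattice. -/
noncomputable abbrev cohOfCoh {n : ℕ} (q : ℕ) [NeZero q] (M : Matrix (Fin n) (Fin n) ℤ)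
    (hq : M ^ q = 1) (i j : ℕ) : ModuleCat ℤ :=
  groupCohomology
    (cohRep (matAction q M hq) (1 : Representation ℤ (Multiplicative (ZMod q)) ℤ) j) i

/-- `H^k(Γ, ℤ)` for `Γ = ℤ^n ⋊ ℤ/q`, with trivial coefficients `ℤ`. -/
noncomputable abbrev cohCrys {n : ℕ} (q : ℕ) [NeZero q] (M : Matrix (Fin n) (Fin n) ℤ)
    (hq : M ^ q = 1) (k : ℕ) : ModuleCat ℤ :=
  groupCohomology (Rep.trivial ℤ (Crys q M hq) ℤ) k

end Crystal

/-- The holonomy matrix. -/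
def holM : Matrix (Fin 5) (Fin 5) ℤ := !![0, 0, 0, 0, -1; 1, 0, 0, 0, -1; 0, 1, 0, 0, 0; 0, 0, 1, 0, 0; 0, 0, 0, 1, -1]

lemma holM_pow : holM ^ 8 = 1 := by decide

/-- `H^k(ℤ^5 ⋊ ℤ/8, ℤ)`, where the generator of `ℤ/8` acts on `ℤ^5` by left
multiplication by the matrix `holM`. -/
noncomputable abbrev H (k : ℕ) : ModuleCat ℤ := Crystal.cohCrys 8 holM holM_pow k

/-- `H^i(ℤ/8, H^j(ℤ^5, ℤ))`, with the functorially induced action on coefficients. -/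
noncomputable abbrev Hc (i j : ℕ) : ModuleCat ℤ := Crystal.cohOfCoh 8 holM holM_pow i j

/-!
The lattice `ℤ^5` is isomorphic to `D₅`, the integer vectors with even coordinate sum, in such a
way that `holM` becomes a signed permutation of the coordinates. Hence `Γ = ℤ^5 ⋊ ℤ/8` acts
cellularly on `ℝ^5` cubulated by unit cubes, and tensoring the cubical chains with the 2-periodic
resolution of `ℤ` over `ℤ[ℤ/8]` gives a free resolution of `ℤ` over `ℤ[Γ]`. Its generators in
degree `n` are the `D₅`-orbits of cells of dimension at most `n`, of which there are 64 in all, so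
that `Γ`-equivariant cochains are integer vectors of length at most 64 and their cohomology can be
read off by integer elimination. As cells have dimension at most 5, the coboundaries repeat with
period 2 from degree 6 on, and elimination in the degrees 1 to 7 settles all degrees.
-/

namespace Crystal

section Homology

open CategoryTheory

theorem nonempty_homology_addEquiv {R : Type} [CommRing R]
    {S : ShortComplex (ModuleCat.{0} R)} {Q : Type} [AddCommGroup Q] [Module R Q]
    (π : S.X₂ →ₗ[R] Q) (π_boundary : ∀ x, π (S.f.hom x) = 0)
    (π_surjective : ∀ q, ∃ x, S.g.hom x = 0 ∧ π x = q)
    (π_injective : ∀ x, S.g.hom x = 0 → π x = 0 → ∃ y, S.f.hom y = x) :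
    Nonempty (S.homology ≃+ Q) := by
  let πcycles : LinearMap.ker S.g.hom →ₗ[R] Q := π ∘ₗ Submodule.subtype _
  have surjective : Function.Surjective πcycles := fun q =>
    let ⟨x, hx, hq⟩ := π_surjective q
    ⟨⟨x, hx⟩, hq⟩
  have range_eq_ker : LinearMap.range S.moduleCatToCycles = LinearMap.ker πcycles := by
    ext x
    constructor
    · rintro ⟨y, rfl⟩
      exact π_boundary y
    · intro hx
      obtain ⟨y, hy⟩ := π_injective x.1 x.2 hx
      exact ⟨y, Subtype.ext hy⟩
  exact ⟨S.moduleCatHomologyIso.toLinearEquiv.toAddEquiv.trans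
    ((Submodule.quotEquivOfEq _ _ range_eq_ker).trans
      (πcycles.quotKerEquivOfSurjective surjective)).toAddEquiv⟩

variable {k : Type} [CommRing k] {G : Type} [Group G]

theorem rep_exact_of_forall (S : ShortComplex (Rep.{0} k G))
    (h : ∀ x, S.g.hom x = 0 → ∃ y, S.f.hom y = x) : S.Exact := by
  apply (forget₂ _ (ModuleCat k)).reflects_exact_of_faithful
  rwa [ShortComplex.moduleCat_exact_iff]

theorem quasiIso_toSingle₀ (K : ChainComplex (Rep.{0} k G) ℕ) {A : Rep.{0} k G}
    (ε : K.X 0 ⟶ A) (d_ε : K.d 1 0 ≫ ε = 0) (ε_surjective : Function.Surjective ε.hom)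
    (exact_zero : ∀ x, ε.hom x = 0 → ∃ y, (K.d 1 0).hom y = x)
    (exact_succ : ∀ n x, (K.d (n + 1) n).hom x = 0 → ∃ y, (K.d (n + 2) (n + 1)).hom y = x) :
    QuasiIso ((K.toSingle₀Equiv A).symm ⟨ε, d_ε⟩) := by
  refine ⟨fun n => ?_⟩
  match n with
  | 0 =>
    have f_zero (x) : (((K.toSingle₀Equiv A).symm ⟨ε, d_ε⟩).f 0).hom x = ε.hom x :=
      congrArg (fun t => t.hom x) (ChainComplex.toSingle₀Equiv_symm_apply_f_zero (C := K) ε d_ε)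
    rw [ChainComplex.quasiIsoAt₀_iff,
      ShortComplex.quasiIso_iff_of_zeros' _ (K.shape _ _ (by simp)) rfl rfl]
    refine ⟨rep_exact_of_forall _ fun x hx => exact_zero x ((f_zero x).symm.trans hx), ?_⟩
    rw [Rep.epi_iff_surjective]
    intro y
    obtain ⟨x, hx⟩ := ε_surjective y
    exact ⟨x, (f_zero x).trans hx⟩
  | n + 1 =>
    rw [quasiIsoAt_iff_exactAt' (hL := ChainComplex.exactAt_succ_single_obj ..),
      HomologicalComplex.exactAt_iff' _ (n + 2) (n + 1) n (by simp) (by simp)]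
    exact rep_exact_of_forall _ (exact_succ n)

theorem nonempty_groupCohomology_addEquiv (P : ProjectiveResolution (Rep.trivial k G k))
    (A : Rep.{0} k G) (n : ℕ) {Q : Type} [AddCommGroup Q] [Module k Q]
    (π : (P.complex.X (n + 1) ⟶ A) →ₗ[k] Q)
    (π_coboundary : ∀ f : P.complex.X n ⟶ A, π (P.complex.d (n + 1) n ≫ f) = 0)
    (π_surjective : ∀ q, ∃ f : P.complex.X (n + 1) ⟶ A,
      P.complex.d (n + 2) (n + 1) ≫ f = 0 ∧ π f = q)
    (π_injective : ∀ f : P.complex.X (n + 1) ⟶ A, P.complex.d (n + 2) (n + 1) ≫ f = 0 →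
      π f = 0 → ∃ g : P.complex.X n ⟶ A, P.complex.d (n + 1) n ≫ g = f) :
    Nonempty (groupCohomology A (n + 1) ≃+ Q) := by
  let L := P.complex.linearYonedaObj k A
  let toShort : groupCohomology A (n + 1) ≅ (L.sc' n (n + 1) (n + 2)).homology :=
    groupCohomologyIso A (n + 1) P ≪≫
      ShortComplex.homologyMapIso (L.isoSc' n (n + 1) (n + 2) (by simp) (by simp))
  obtain ⟨e⟩ := nonempty_homology_addEquiv (S := L.sc' n (n + 1) (n + 2)) (Q := Q) π
    π_coboundary π_surjective π_injective
  exact ⟨toShort.toLinearEquiv.toAddEquiv.trans e⟩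

end Homology

section FreeRepresentation

open CategoryTheory

variable {k : Type} [CommRing k] {G : Type} {E : Type} [AddCommGroup E] [Module k E]
  {ι : Type} {B : Module.Basis (G × ι) k E}

/-- The linear functional on `E` with value `v i` on the whole orbit of `B (1, i)`. -/
noncomputable def orbitFunctional (B : Module.Basis (G × ι) k E) :
    (ι → k) →ₗ[k] E →ₗ[k] k :=
  (B.constr k).toLinearMap ∘ₗ LinearMap.funLeft k k Prod.snd

@[simp]
theorem orbitFunctional_basis (v : ι → k) (p : G × ι) : orbitFunctional B v (B p) = v p.2 := by
  simp [orbitFunctional, Module.Basis.constr_basis]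

variable [Group G] {ρ : Representation k G E}

/-- `B` exhibits `ρ` as the free representation on the orbit representatives `B (1, i)`. -/
def IsFreeBasis (ρ : Representation k G E) (B : Module.Basis (G × ι) k E) : Prop :=
  ∀ h g i, ρ h (B (g, i)) = B (h * g, i)

namespace IsFreeBasis

section

variable {M : Type} [AddCommGroup M] [Module k M]

theorem ext (hB : IsFreeBasis ρ B) {τ : Representation k G M} {φ ψ : E →ₗ[k] M}
    (hφ : ∀ g x, φ (ρ g x) = τ g (φ x)) (hψ : ∀ g x, ψ (ρ g x) = τ g (ψ x))
    (h : ∀ i, φ (B (1, i)) = ψ (B (1, i))) : φ = ψ := by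
  refine B.ext fun ⟨g, i⟩ => ?_
  rw [← mul_one g, ← hB, hφ, hψ, h]

theorem exists_lift (hB : IsFreeBasis ρ B) (τ : Representation k G M) (v : ι → M) :
    ∃ φ : E →ₗ[k] M, (∀ g x, φ (ρ g x) = τ g (φ x)) ∧ ∀ i, φ (B (1, i)) = v i := by
  let φ : E →ₗ[k] M := B.constr k fun p => τ p.1 (v p.2)
  have φ_rho (g : G) : φ ∘ₗ ρ g = τ g ∘ₗ φ := B.ext fun ⟨h, i⟩ => by
    simp [φ, hB g h i, Module.Basis.constr_basis]
  exact ⟨φ, fun g => LinearMap.congr_fun (φ_rho g), fun i => by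
    simp [φ, Module.Basis.constr_basis]⟩

end

theorem projective (hB : IsFreeBasis ρ B) : Projective (Rep.of ρ) where
  factors {X Y} f e he := by
    rw [Rep.epi_iff_surjective] at he
    choose v hv using fun i => he (f.hom (B (1, i)))
    obtain ⟨φ, φ_equivariant, φ_basis⟩ := hB.exists_lift X.ρ v
    let lift : Rep.of ρ ⟶ X := Rep.ofHom ⟨φ, fun g => LinearMap.ext (φ_equivariant g)⟩
    refine ⟨lift, ?_⟩
    ext1
    ext1
    exact hB.ext (τ := Y.ρ) (Rep.hom_comm_apply (lift ≫ e)) (Rep.hom_comm_apply f)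
      fun i => (congrArg e.hom (φ_basis i)).trans (hv i)

end IsFreeBasis

theorem orbitFunctional_rho (hB : IsFreeBasis ρ B) (v : ι → k) (g : G) (x : E) :
    orbitFunctional B v (ρ g x) = orbitFunctional B v x := by
  refine LinearMap.congr_fun (f := orbitFunctional B v ∘ₗ ρ g) (B.ext fun ⟨h, i⟩ => ?_) x
  simp [hB g h i]

theorem eq_orbitFunctional (hB : IsFreeBasis ρ B) {φ : E →ₗ[k] k}
    (hφ : ∀ g x, φ (ρ g x) = φ x) : φ = orbitFunctional B fun i => φ (B (1, i)) :=
  hB.ext (τ := Representation.trivial k G k) hφ (orbitFunctional_rho hB _) fun i => by simp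

/-- The endomorphism of `ι → k` through which an equivariant `A` acts on invariant functionals. -/
noncomputable def orbitTranspose (B : Module.Basis (G × ι) k E) (A : Module.End k E) :
    (ι → k) →ₗ[k] ι → k where
  toFun v i := orbitFunctional B v (A (B (1, i)))
  map_add' _ _ := by ext; simp
  map_smul' _ _ := by ext; simp

theorem orbitTranspose_apply (A : Module.End k E) (v : ι → k) (i : ι) :
    orbitTranspose B A v i = orbitFunctional B v (A (B (1, i))) := rfl

theorem orbitFunctional_orbitTranspose (hB : IsFreeBasis ρ B) {A : Module.End k E}
    (hA : ∀ g x, A (ρ g x) = ρ g (A x)) (v : ι → k) (x : E) :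
    orbitFunctional B (orbitTranspose B A v) x = orbitFunctional B v (A x) :=
  (LinearMap.congr_fun (eq_orbitFunctional hB (φ := orbitFunctional B v ∘ₗ A) fun g x => by
    simp only [LinearMap.comp_apply, hA, orbitFunctional_rho hB]) x).symm

end FreeRepresentation

section TruncatedResolution

open CategoryTheory

variable {k : Type} [CommRing k] {G : Type} [Group G] {E : Type} [AddCommGroup E] [Module k E]

/-- A resolution of the trivial module whose `n`-th term is the image of an equivariant
idempotent `trunc n` of one fixed representation; `d n` goes from degree `n + 1` to degree `n`. -/
structure TruncatedResolution (ρ : Representation k G E) where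
  d : ℕ → Module.End k E
  trunc : ℕ → Module.End k E
  aug : E →ₗ[k] k
  d_rho : ∀ n g x, d n (ρ g x) = ρ g (d n x)
  trunc_rho : ∀ n g x, trunc n (ρ g x) = ρ g (trunc n x)
  aug_rho : ∀ g x, aug (ρ g x) = aug x
  trunc_trunc : ∀ n x, trunc n (trunc n x) = trunc n x
  trunc_d : ∀ n x, trunc n (d n x) = d n (trunc (n + 1) x)
  d_d : ∀ n x, d n (d (n + 1) x) = 0
  aug_d : ∀ x, aug (d 0 x) = 0
  exists_aug_trunc : ∃ x, aug (trunc 0 x) = 1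
  exact_zero : ∀ x, trunc 0 x = x → aug x = 0 → ∃ y, d 0 y = x
  exact_succ : ∀ n x, d n x = 0 → ∃ y, d (n + 1) y = x

namespace TruncatedResolution

variable {ρ : Representation k G E} (R : TruncatedResolution ρ)

/-- The `n`-th term of the resolution. -/
noncomputable def term (n : ℕ) : Rep.{0} k G :=
  Rep.subrepresentation (Rep.of ρ) (LinearMap.range (R.trunc n)) fun g => by
    rintro _ ⟨x, rfl⟩
    exact ⟨ρ g x, R.trunc_rho n g x⟩

/-- The element `trunc n x` of the `n`-th term. -/
def toTerm (n : ℕ) (x : E) : R.term n := ⟨R.trunc n x, x, rfl⟩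

theorem trunc_coe {n : ℕ} (x : LinearMap.range (R.trunc n)) : R.trunc n x.1 = x.1 := by
  obtain ⟨_, x, rfl⟩ := x
  exact R.trunc_trunc n x

theorem toTerm_coe {n : ℕ} (x : LinearMap.range (R.trunc n)) : R.toTerm n x.1 = x :=
  Subtype.ext (R.trunc_coe x)

theorem d_mem {n : ℕ} {x : E} (hx : x ∈ LinearMap.range (R.trunc (n + 1))) :
    R.d n x ∈ LinearMap.range (R.trunc n) := by
  obtain ⟨x, rfl⟩ := hx
  exact ⟨R.d n x, R.trunc_d n x⟩

/-- The differential between consecutive terms. -/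
noncomputable def termD (n : ℕ) : R.term (n + 1) ⟶ R.term n :=
  Rep.ofHom ⟨(R.d n).restrict fun _ => R.d_mem,
    fun g => LinearMap.ext fun x => Subtype.ext (R.d_rho n g x.1)⟩

/-- The augmentation of the degree-zero term. -/
noncomputable def termAug : R.term 0 ⟶ Rep.trivial k G k :=
  Rep.ofHom (⟨R.aug ∘ₗ Submodule.subtype _, fun g => LinearMap.ext fun x => R.aug_rho g x.1⟩ :
    (R.term 0).ρ.IntertwiningMap (Rep.trivial k G k).ρ)

/-- The chain complex formed by the terms. -/
noncomputable def complex : ChainComplex (Rep.{0} k G) ℕ :=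
  ChainComplex.of R.term R.termD fun n => by
    ext x
    exact Subtype.ext (R.d_d n x.1)

theorem complex_d (n : ℕ) : R.complex.d (n + 1) n = R.termD n := ChainComplex.of_d _ _ _

theorem projective_term [Projective (Rep.of ρ)] (n : ℕ) : Projective (R.term n) :=
  Retract.projective (Y := Rep.of ρ)
    { i := Rep.ofHom ⟨Submodule.subtype _, fun _ => rfl⟩
      r := Rep.ofHom ⟨(R.trunc n).rangeRestrict,
        fun g => LinearMap.ext fun x => Subtype.ext (R.trunc_rho n g x)⟩
      retract := by
        ext x
        exact R.toTerm_coe x }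

theorem quasiIso_termAug (d_aug : R.complex.d 1 0 ≫ R.termAug = 0) :
    QuasiIso ((R.complex.toSingle₀Equiv _).symm ⟨R.termAug, d_aug⟩) := by
  refine quasiIso_toSingle₀ R.complex R.termAug d_aug (fun c => ?_) (fun x hx => ?_)
    fun n x hx => ?_
  · obtain ⟨x, hx⟩ := R.exists_aug_trunc
    refine ⟨R.toTerm 0 (c • x), ?_⟩
    change R.aug (R.trunc 0 (c • x)) = c
    rw [map_smul, map_smul, hx, smul_eq_mul, mul_one]
  · obtain ⟨y, hy⟩ := R.exact_zero x.1 (R.trunc_coe x) hx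
    rw [R.complex_d]
    exact ⟨R.toTerm 1 y, Subtype.ext ((R.trunc_d 0 y).symm.trans (hy ▸ R.trunc_coe x))⟩
  · rw [R.complex_d] at hx ⊢
    obtain ⟨y, hy⟩ := R.exact_succ n x.1 (congrArg Subtype.val hx)
    exact ⟨R.toTerm (n + 2) y, Subtype.ext ((R.trunc_d _ y).symm.trans (hy ▸ R.trunc_coe x))⟩

/-- The projective resolution of the trivial module formed by the terms. -/
noncomputable def toProjectiveResolution [Projective (Rep.of ρ)] :
    ProjectiveResolution (Rep.trivial k G k) :=
  have d_aug : R.complex.d 1 0 ≫ R.termAug = 0 := by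
    rw [R.complex_d]
    ext x
    exact R.aug_d x.1
  { complex := R.complex
    projective := R.projective_term
    π := (R.complex.toSingle₀Equiv _).symm ⟨R.termAug, d_aug⟩
    quasiIso := R.quasiIso_termAug d_aug }

variable {ι : Type} {B : Module.Basis (G × ι) k E}

/-- The cochain on the `n`-th term given by a function on the orbits of basis elements. -/
noncomputable def cochain (hB : IsFreeBasis ρ B) (n : ℕ) (v : ι → k) :
    R.term n ⟶ Rep.trivial k G k :=
  Rep.ofHom (⟨orbitFunctional B v ∘ₗ Submodule.subtype _,
    fun g => LinearMap.ext fun x => orbitFunctional_rho hB v g x.1⟩ :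
    (R.term n).ρ.IntertwiningMap (Rep.trivial k G k).ρ)

/-- The function on orbits underlying a cochain. -/
noncomputable def cochainVec (B : Module.Basis (G × ι) k E) (n : ℕ) :
    (R.term n ⟶ Rep.trivial k G k) →ₗ[k] ι → k where
  toFun f i := f.hom (R.toTerm n (B (1, i)))
  map_add' _ _ := rfl
  map_smul' _ _ := rfl

theorem cochainVec_cochain (hB : IsFreeBasis ρ B) (n : ℕ) (v : ι → k) :
    R.cochainVec B n (R.cochain hB n v) = orbitTranspose B (R.trunc n) v := rfl

theorem cochain_cochainVec (hB : IsFreeBasis ρ B) (n : ℕ) (f : R.term n ⟶ Rep.trivial k G k) :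
    R.cochain hB n (R.cochainVec B n f) = f := by
  let φ : E →ₗ[k] k := f.hom.toLinearMap ∘ₗ (R.trunc n).rangeRestrict
  have φ_rho (g : G) (x : E) : φ (ρ g x) = φ x :=
    (congrArg f.hom (Subtype.ext (R.trunc_rho n g x))).trans
      (Rep.hom_comm_apply f g (R.toTerm n x))
  ext x
  refine (LinearMap.congr_fun (eq_orbitFunctional hB φ_rho) x.1).symm.trans ?_
  exact congrArg f.hom (R.toTerm_coe x)

theorem termD_cochain (hB : IsFreeBasis ρ B) (n : ℕ) (v : ι → k) :
    R.termD n ≫ R.cochain hB n v = R.cochain hB (n + 1) (orbitTranspose B (R.d n) v) := by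
  ext x
  exact (orbitFunctional_orbitTranspose hB (R.d_rho n) v x.1).symm

theorem complex_d_cochain (hB : IsFreeBasis ρ B) (n : ℕ) (v : ι → k) :
    R.complex.d (n + 1) n ≫ (R.cochain hB n v : R.complex.X n ⟶ _) =
      R.cochain hB (n + 1) (orbitTranspose B (R.d n) v) :=
  (congrArg (· ≫ R.cochain hB n v) (R.complex_d n)).trans (R.termD_cochain hB n v)

theorem cochain_eq_iff (hB : IsFreeBasis ρ B) {n : ℕ} {v w : ι → k} :
    R.cochain hB n v = R.cochain hB n w ↔
      orbitTranspose B (R.trunc n) v = orbitTranspose B (R.trunc n) w := by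
  refine ⟨fun h => ?_, fun h => ?_⟩
  · simpa only [cochainVec_cochain] using congrArg (R.cochainVec B n) h
  · rw [← R.cochain_cochainVec hB n (R.cochain hB n v), cochainVec_cochain, h,
      ← cochainVec_cochain R hB, cochain_cochainVec]

theorem cochain_eq_zero_iff (hB : IsFreeBasis ρ B) {n : ℕ} {v : ι → k} :
    R.cochain hB n v = 0 ↔ orbitTranspose B (R.trunc n) v = 0 := by
  have cochain_zero : R.cochain hB n 0 = 0 := by
    rw [← R.cochain_cochainVec hB n 0, map_zero]
  rw [← cochain_zero, cochain_eq_iff, map_zero]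

theorem nonempty_addEquiv_of_orbits (hB : IsFreeBasis ρ B) (n : ℕ) {Q : Type} [AddCommGroup Q]
    [Module k Q] (π : (ι → k) →ₗ[k] Q)
    (π_trunc : ∀ v, π (orbitTranspose B (R.trunc (n + 1)) v) = π v)
    (π_coboundary : ∀ v, π (orbitTranspose B (R.d n) v) = 0)
    (π_surjective : ∀ q, ∃ v,
      orbitTranspose B (R.trunc (n + 2)) (orbitTranspose B (R.d (n + 1)) v) = 0 ∧ π v = q)
    (π_injective : ∀ v,
      orbitTranspose B (R.trunc (n + 2)) (orbitTranspose B (R.d (n + 1)) v) = 0 → π v = 0 →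
      ∃ w, orbitTranspose B (R.trunc (n + 1)) (orbitTranspose B (R.d n) w) =
        orbitTranspose B (R.trunc (n + 1)) v) :
    Nonempty (groupCohomology (Rep.trivial k G k) (n + 1) ≃+ Q) := by
  have := hB.projective
  have eq_cochain (m : ℕ) (f : R.term m ⟶ _) : ∃ v, f = R.cochain hB m v :=
    ⟨_, (R.cochain_cochainVec hB m f).symm⟩
  refine nonempty_groupCohomology_addEquiv R.toProjectiveResolution _ n
    (π ∘ₗ R.cochainVec B (n + 1)) (fun f => ?_) (fun q => ?_) fun f hf hπ => ?_
  · obtain ⟨v, rfl⟩ := eq_cochain n f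
    refine (congrArg (π ∘ₗ R.cochainVec B (n + 1)) (R.complex_d_cochain hB n v)).trans ?_
    exact (π_trunc _).trans (π_coboundary v)
  · obtain ⟨v, hv, rfl⟩ := π_surjective q
    exact ⟨R.cochain hB (n + 1) v,
      (R.complex_d_cochain hB (n + 1) v).trans ((R.cochain_eq_zero_iff hB).2 hv), π_trunc v⟩
  · obtain ⟨v, rfl⟩ := eq_cochain (n + 1) f
    obtain ⟨w, hw⟩ := π_injective v
      ((R.cochain_eq_zero_iff hB).1 ((R.complex_d_cochain hB (n + 1) v).symm.trans hf))
      ((π_trunc v).symm.trans hπ)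
    exact ⟨R.cochain hB n w, (R.complex_d_cochain hB n w).trans ((R.cochain_eq_iff hB).2 hw)⟩

end TruncatedResolution

end TruncatedResolution

section Line

variable {R : Type} [CommRing R]

/-- A shortcut without which the search for the `HasDistribNeg` structure of this ring fails. -/
noncomputable instance instRingEndFinsupp {X : Type} : Ring (Module.End R (X →₀ R)) :=
  Module.End.instRing

theorem end_ext_single {X : Type} {A B : Module.End R (X →₀ R)}
    (h : ∀ x, A (Finsupp.single x 1) = B (Finsupp.single x 1)) : A = B :=
  Finsupp.basisSingleOne.ext fun x => by simpa using h x

variable (R)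

/-- The cellular boundary of the real line whose vertices are the even integers `m` and whose
edges are the odd integers `m`, the edge `m` running from `m - 1` to `m + 1`. -/
noncomputable def lineBoundary : Module.End R (ℤ →₀ R) :=
  Finsupp.linearCombination R fun m =>
    if Odd m then Finsupp.single (m + 1) 1 - Finsupp.single (m - 1) 1 else 0

/-- The chain of edges leading from the vertex `0` to the vertex `m`. -/
noncomputable def linePath (m : ℤ) : ℤ →₀ R :=
  (∑ l ∈ Finset.Ioo 0 m with Odd l, Finsupp.single l 1) -
    ∑ l ∈ Finset.Ioo m 0 with Odd l, Finsupp.single l 1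

/-- The contraction of the line to the vertex `0`. -/
noncomputable def lineContraction : Module.End R (ℤ →₀ R) :=
  Finsupp.linearCombination R fun m => if Even m then linePath R m else 0

/-- The chain map collapsing the line to the vertex `0`. -/
noncomputable def lineCollapse : Module.End R (ℤ →₀ R) :=
  Finsupp.linearCombination R fun m => if Even m then Finsupp.single 0 1 else 0

theorem lineBoundary_single (m : ℤ) : lineBoundary R (Finsupp.single m 1) =
    if Odd m then Finsupp.single (m + 1) 1 - Finsupp.single (m - 1) 1 else 0 := by
  simp [lineBoundary]

theorem linePath_apply (m l : ℤ) : linePath R m l =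
    (if Odd l ∧ 0 < l ∧ l < m then 1 else 0) - if Odd l ∧ m < l ∧ l < 0 then 1 else 0 := by
  simp [linePath, Finsupp.single_apply, Finset.sum_ite_eq', and_comm]

theorem linePath_add_one_sub {m : ℤ} (hm : Odd m) :
    linePath R (m + 1) - linePath R (m - 1) = Finsupp.single m 1 := by
  ext l
  simp only [Finsupp.sub_apply, linePath_apply, Finsupp.single_apply, Int.odd_iff] at hm ⊢
  split_ifs <;> first | omega | simp

theorem lineBoundary_linePath {m : ℤ} (hm : Even m) :
    lineBoundary R (linePath R m) = Finsupp.single m 1 - Finsupp.single 0 1 := by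
  have step (u : ℤ) : lineBoundary R (linePath R (2 * u + 2)) - lineBoundary R (linePath R (2 * u))
      = Finsupp.single (2 * u + 2) 1 - Finsupp.single (2 * u) 1 := by
    have path_step := linePath_add_one_sub R (odd_two_mul_add_one u)
    rw [add_sub_cancel_right, add_assoc, one_add_one_eq_two] at path_step
    rw [← map_sub, path_step, lineBoundary_single, if_pos (odd_two_mul_add_one u),
      add_sub_cancel_right, add_assoc, one_add_one_eq_two]
  obtain ⟨u, rfl⟩ := hm.two_dvd
  clear hm
  induction u with
  | zero => simp [linePath]
  | succ u ih => rw [mul_add_one, ← sub_add_cancel (lineBoundary R _), step, ih]; abel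
  | pred u ih =>
    have := step (-u - 1)
    rw [mul_sub_one, sub_add_cancel, ih] at this
    rw [mul_sub_one, ← sub_right_inj, this]
    abel

theorem lineBoundary_mul_self : lineBoundary R * lineBoundary R = 0 := by
  refine end_ext_single fun m => ?_
  rcases m.even_or_odd with hm | hm
  · simp [lineBoundary_single, Int.not_odd_iff_even.2 hm]
  · simp [lineBoundary_single, hm, Int.not_even_iff_odd.2 hm]

theorem lineContraction_homotopy :
    lineBoundary R * lineContraction R + lineContraction R * lineBoundary R =
      1 - lineCollapse R := by
  refine end_ext_single fun m => ?_
  rcases m.even_or_odd with hm | hm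
  · simp [lineBoundary_single, lineContraction, lineCollapse, lineBoundary_linePath, hm,
      Int.not_odd_iff_even.2]
  · simp [lineBoundary_single, lineContraction, lineCollapse, hm, Int.not_even_iff_odd.2,
      hm.add_one, hm.sub_odd, linePath_add_one_sub]

variable {R}

/-- The operator `A` maps edges of the line to vertices and kills vertices. -/
def EdgeToVertex (A : Module.End R (ℤ →₀ R)) : Prop :=
  ∀ m l, A (Finsupp.single m 1) l ≠ 0 → Odd m ∧ Even l

/-- The operator `A` maps vertices of the line to edges and kills edges. -/
def VertexToEdge (A : Module.End R (ℤ →₀ R)) : Prop :=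
  ∀ m l, A (Finsupp.single m 1) l ≠ 0 → Even m ∧ Odd l

theorem edgeToVertex_lineBoundary : EdgeToVertex (lineBoundary R) := by
  intro m l h
  rw [lineBoundary_single] at h
  split_ifs at h with hm
  · refine ⟨hm, ?_⟩
    rcases eq_or_ne l (m + 1) with rfl | hl
    · exact hm.add_one
    · rcases eq_or_ne l (m - 1) with rfl | hl'
      · exact hm.sub_odd odd_one
      · simp [hl.symm, hl'.symm] at h
  · simp at h

theorem vertexToEdge_lineContraction : VertexToEdge (lineContraction R) := by
  intro m l h
  simp only [lineContraction, Finsupp.linearCombination_single, one_smul] at h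
  split_ifs at h with hm
  · refine ⟨hm, by_contra fun hl => ?_⟩
    simp [linePath_apply, hl] at h
  · simp at h

end Line

section Cube

variable {R : Type} [CommRing R]

/-- The diagonal operator multiplying the basis element `x` by `f x`. -/
noncomputable def diag {X : Type} (f : X → R) : Module.End R (X →₀ R) :=
  Finsupp.linearCombination R fun x => Finsupp.single x (f x)

theorem diag_single {X : Type} (f : X → R) (x : X) (r : R) :
    diag f (Finsupp.single x r) = Finsupp.single x (r * f x) := by
  simp [diag]

theorem diag_mul_diag {X : Type} (f g : X → R) : diag f * diag g = diag (f * g) :=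
  end_ext_single fun x => by simp [diag_single, mul_comm]

theorem diag_one {X : Type} : diag (1 : X → R) = 1 :=
  end_ext_single fun x => by simp [diag_single]

theorem diag_neg {X : Type} (f : X → R) : diag (-f) = -diag f :=
  end_ext_single fun x => by simp [diag_single]

theorem diag_zero {X : Type} : diag (0 : X → R) = 0 :=
  end_ext_single fun x => by simp [diag_single]

variable {ι : Type} [DecidableEq ι]

/-- The operator `A` acting on the `i`-th coordinate of the cells of `ℝ^ι`. -/
noncomputable def coord (i : ι) : Module.End R (ℤ →₀ R) →+* Module.End R ((ι → ℤ) →₀ R) where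
  toFun A := Finsupp.linearCombination R fun x =>
    (A (Finsupp.single (x i) 1)).mapDomain (Function.update x i)
  map_zero' := end_ext_single fun x => by simp
  map_one' := end_ext_single fun x => by simp
  map_add' A B := end_ext_single fun x => by simp [Finsupp.mapDomain_add]
  map_mul' A B := by
    refine end_ext_single fun x => ?_
    simp only [Finsupp.linearCombination_single, one_smul, Module.End.mul_apply]
    induction B (Finsupp.single (x i) 1) using Finsupp.induction_linear with
    | zero => simp
    | add y z hy hz => simp [Finsupp.mapDomain_add, hy, hz]
    | single m r =>
      have A_single : A (Finsupp.single m r) = r • A (Finsupp.single m 1) := by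
        rw [← map_smul, Finsupp.smul_single_one]
      have update_update : Function.update (Function.update x i m) i = Function.update x i :=
        funext fun l => Function.update_idem m l x
      simp [Finsupp.mapDomain_single, A_single, Finsupp.mapDomain_smul, update_update]

theorem coord_single (i : ι) (A : Module.End R (ℤ →₀ R)) (x : ι → ℤ) :
    coord i A (Finsupp.single x 1) =
      (A (Finsupp.single (x i) 1)).mapDomain (Function.update x i) := by
  simp [coord]

theorem diag_mul_coord {i : ι} {A : Module.End R (ℤ →₀ R)} {f g : (ι → ℤ) → R}
    (h : ∀ x m, A (Finsupp.single (x i) 1) m ≠ 0 → f (Function.update x i m) = g x) :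
    diag f * coord i A = coord i A * diag g := by
  refine end_ext_single fun x => ?_
  rw [Module.End.mul_apply, Module.End.mul_apply, diag_single, one_mul,
    ← Finsupp.smul_single_one x (g x), map_smul, coord_single, Finsupp.mapDomain, Finsupp.sum,
    map_sum, Finset.smul_sum]
  refine Finset.sum_congr rfl fun m hm => ?_
  rw [diag_single, h x m (Finsupp.mem_support_iff.1 hm), Finsupp.smul_single, smul_eq_mul,
    mul_comm]

theorem coord_mul_coord_comm {i j : ι} (hij : i ≠ j) (A B : Module.End R (ℤ →₀ R)) :
    coord i A * coord j B = coord j B * coord i A := by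
  refine end_ext_single fun x => ?_
  have coord_mapDomain (i j : ι) (hij : i ≠ j) (A : Module.End R (ℤ →₀ R)) (b : ℤ →₀ R) :
      coord i A (b.mapDomain (Function.update x j)) = b.sum fun m r =>
        (A (Finsupp.single (x i) 1)).sum fun l s =>
          Finsupp.single (Function.update (Function.update x j m) i l) (r * s) := by
    rw [Finsupp.mapDomain, map_finsuppSum]
    refine Finsupp.sum_congr fun m _ => ?_
    rw [← Finsupp.smul_single_one, map_smul, coord_single, Function.update_of_ne hij,
      Finsupp.mapDomain, Finsupp.smul_sum]
    simp
  rw [Module.End.mul_apply, Module.End.mul_apply, coord_single, coord_single,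
    coord_mapDomain i j hij, coord_mapDomain j i hij.symm, Finsupp.sum_comm]
  simp only [mul_comm, Function.update_comm hij]

variable [Fintype ι]

/-- The dimension of the cell `x` of `ℝ^ι`, a product of vertices and edges of the line. -/
def cubeDim (x : ι → ℤ) : ℕ := Finset.card {j | Odd (x j)}

theorem cubeDim_update_even {x : ι → ℤ} {i : ι} {m : ℤ} (hx : Odd (x i)) (hm : Even m) :
    cubeDim (Function.update x i m) + 1 = cubeDim x := by
  have erase_eq : ({j | Odd (Function.update x i m j)} : Finset ι) =
      Finset.erase {j | Odd (x j)} i := by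
    ext j
    rcases eq_or_ne j i with rfl | hj
    · simp [Int.not_odd_iff_even.2 hm]
    · simp [hj]
  rw [cubeDim, cubeDim, erase_eq, Finset.card_erase_add_one (by simp [hx])]

theorem cubeDim_update_odd {x : ι → ℤ} {i : ι} {m : ℤ} (hx : Even (x i)) (hm : Odd m) :
    cubeDim (Function.update x i m) = cubeDim x + 1 := by
  simpa using (cubeDim_update_even (x := Function.update x i m) (i := i) (by simpa) hx).symm

end Cube

section Koszul

variable {R : Type} [CommRing R] {ι : Type} [LinearOrder ι] [Fintype ι]

/-- The Koszul sign `(-1) ^ ∑ j < i, x j` of moving an odd operator past the coordinates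
before `i`. -/
def koszulSign (i : ι) (x : ι → ℤ) : ℤˣ := (∑ j with j < i, x j).negOnePow

theorem koszulSign_update_of_lt {i j : ι} (hij : i < j) {x : ι → ℤ} {m : ℤ}
    (hm : Odd (m - x i)) : koszulSign j (Function.update x i m) = -koszulSign j x := by
  have hi : i ∈ Finset.univ.filter (· < j) := by simpa
  rw [koszulSign, koszulSign, ← Int.negOnePow_succ, Int.negOnePow_eq_iff,
    Finset.sum_update_of_mem hi, Finset.sdiff_singleton_eq_erase, ← Finset.add_sum_erase _ x hi]
  have := hm.sub_odd odd_one
  grind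

theorem koszulSign_update_of_le {i j : ι} (hij : j ≤ i) (x : ι → ℤ) (m : ℤ) :
    koszulSign j (Function.update x i m) = koszulSign j x := by
  rw [koszulSign, koszulSign, Finset.sum_update_of_notMem (by simpa)]

/-- The operator `A` acting on the `i`-th tensor factor of the cellular chains of `ℝ^ι`, with
Koszul signs. -/
noncomputable def koszulCoord (i : ι) (A : Module.End R (ℤ →₀ R)) :
    Module.End R ((ι → ℤ) →₀ R) :=
  coord i A * diag fun x => ((koszulSign i x : ℤ) : R)

theorem diag_mul_koszulCoord {i : ι} {A : Module.End R (ℤ →₀ R)} {f g : (ι → ℤ) → R}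
    (h : ∀ x m, A (Finsupp.single (x i) 1) m ≠ 0 → f (Function.update x i m) = g x) :
    diag f * koszulCoord i A = koszulCoord i A * diag g := by
  rw [koszulCoord, ← mul_assoc, diag_mul_coord h, mul_assoc, mul_assoc, diag_mul_diag,
    diag_mul_diag, mul_comm g]

theorem diag_koszulSign_mul_coord {i j : ι} (hij : j ≤ i) (A : Module.End R (ℤ →₀ R)) :
    (diag fun x => ((koszulSign j x : ℤ) : R)) * coord i A =
      coord i A * diag fun x => ((koszulSign j x : ℤ) : R) :=
  diag_mul_coord fun x m _ => by rw [koszulSign_update_of_le hij]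

theorem diag_koszulSign_mul_self (i : ι) :
    (diag fun x => ((koszulSign i x : ℤ) : R)) * (diag fun x => ((koszulSign i x : ℤ) : R)) =
      1 := by
  rw [diag_mul_diag, ← diag_one]
  congr 1
  ext x
  rcases Int.units_eq_one_or (koszulSign i x) with h | h <;> simp [h]

theorem koszulCoord_mul_koszulCoord_self (i : ι) (A B : Module.End R (ℤ →₀ R)) :
    koszulCoord i A * koszulCoord i B = coord i (A * B) := by
  rw [koszulCoord, koszulCoord, mul_assoc, ← mul_assoc (diag _), diag_koszulSign_mul_coord le_rfl,
    mul_assoc, diag_koszulSign_mul_self, mul_one, map_mul]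

/-- The operator `A` exchanges vertices and edges of the line. -/
def SwapsParity (A : Module.End R (ℤ →₀ R)) : Prop :=
  ∀ m l, A (Finsupp.single m 1) l ≠ 0 → Odd (l - m)

theorem diag_koszulSign_mul_coord_of_lt {i j : ι} (hij : i < j) {A : Module.End R (ℤ →₀ R)}
    (hA : SwapsParity A) : (diag fun x => ((koszulSign j x : ℤ) : R)) * coord i A =
      -(coord i A * diag fun x => ((koszulSign j x : ℤ) : R)) := by
  rw [← mul_neg, ← diag_neg]
  refine diag_mul_coord fun x m hm => ?_
  simp [koszulSign_update_of_lt hij (hA _ _ hm)]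

theorem koszulCoord_anticomm {i j : ι} (hij : i ≠ j) {A B : Module.End R (ℤ →₀ R)}
    (hA : SwapsParity A) (hB : SwapsParity B) :
    koszulCoord i A * koszulCoord j B + koszulCoord j B * koszulCoord i A = 0 := by
  wlog h : i < j generalizing i j A B
  · rw [add_comm]
    exact this hij.symm hB hA (hij.lt_or_gt.resolve_left h)
  simp only [koszulCoord]
  set κi := diag fun x => ((koszulSign i x : ℤ) : R)
  set κj := diag fun x => ((koszulSign j x : ℤ) : R)
  have κi_κj : κi * κj = κj * κi := by rw [diag_mul_diag, diag_mul_diag, mul_comm]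
  have left : coord i A * κi * (coord j B * κj) = coord i A * coord j B * (κi * κj) := by
    rw [mul_assoc, ← mul_assoc κi, diag_koszulSign_mul_coord h.le]
    simp only [mul_assoc, κi]
  have right : coord j B * κj * (coord i A * κi) = -(coord j B * coord i A * (κj * κi)) := by
    rw [mul_assoc, ← mul_assoc κj, diag_koszulSign_mul_coord_of_lt h hA]
    simp only [mul_assoc, neg_mul, mul_neg, κj]
  rw [left, right, κi_κj, coord_mul_coord_comm hij, add_neg_cancel]

end Koszul

section TotalComplex

variable {R : Type} [CommRing R] {ι : Type} [Fintype ι]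

theorem sum_mul_sum_self_eq_zero {S : Type} [Ring S] {a : ι → S} (sq_zero : ∀ i, a i * a i = 0)
    (anticomm : ∀ i j, i ≠ j → a i * a j + a j * a i = 0) : (∑ i, a i) * ∑ i, a i = 0 := by
  rw [Finset.sum_mul_sum, ← Finset.sum_product']
  refine Finset.sum_involution (fun p _ => p.swap) (fun p _ => ?_) (fun p _ hp h => hp ?_)
    (fun _ _ => Finset.mem_univ _) fun p _ => p.swap_swap
  · rcases eq_or_ne p.1 p.2 with h | h
    · simp [h, sq_zero]
    · exact anticomm _ _ h
  · rw [← congrArg Prod.snd h]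
    exact sq_zero _

variable (ι) in
/-- The diagonal operator multiplying the cells of dimension `e` by `f e`. -/
noncomputable def dimDiag (f : ℕ → R) : Module.End R ((ι → ℤ) →₀ R) :=
  diag fun x => f (cubeDim x)

theorem dimDiag_mul_dimDiag (f g : ℕ → R) : dimDiag ι f * dimDiag ι g = dimDiag ι (f * g) :=
  diag_mul_diag _ _

theorem dimDiag_zero : dimDiag ι (0 : ℕ → R) = 0 :=
  diag_zero

theorem dimDiag_neg (f : ℕ → R) : dimDiag ι (-f) = -dimDiag ι f :=
  diag_neg _

variable (R ι) in
/-- The projection onto the cells of dimension at most `n`. -/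
noncomputable def dimTrunc (n : ℕ) : Module.End R ((ι → ℤ) →₀ R) :=
  dimDiag ι fun e => if e ≤ n then 1 else 0

theorem dimTrunc_mul_self (n : ℕ) : dimTrunc R ι n * dimTrunc R ι n = dimTrunc R ι n := by
  rw [dimTrunc, dimDiag_mul_dimDiag]
  congr 1
  ext e
  by_cases he : e ≤ n <;> simp [he]

variable [LinearOrder ι]

theorem EdgeToVertex.swapsParity {A : Module.End R (ℤ →₀ R)} (hA : EdgeToVertex A) :
    SwapsParity A := fun m l h =>
  (hA m l h).2.sub_odd (hA m l h).1

theorem VertexToEdge.swapsParity {A : Module.End R (ℤ →₀ R)} (hA : VertexToEdge A) :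
    SwapsParity A := fun m l h =>
  (hA m l h).2.sub_even (hA m l h).1

variable (R ι) in
/-- The cellular boundary of `ℝ^ι` cubulated by products of vertices and edges of the line. -/
noncomputable def cubeBoundary : Module.End R ((ι → ℤ) →₀ R) :=
  ∑ i, koszulCoord i (lineBoundary R)

theorem cubeBoundary_mul_self : cubeBoundary R ι * cubeBoundary R ι = 0 :=
  have swaps := (edgeToVertex_lineBoundary (R := R)).swapsParity
  sum_mul_sum_self_eq_zero
    (fun i => by rw [koszulCoord_mul_koszulCoord_self, lineBoundary_mul_self, map_zero])
    fun _ _ hij => koszulCoord_anticomm hij swaps swaps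

variable (R) in
/-- The contraction of the `i`-th coordinate of `ℝ^ι` to `0`. -/
noncomputable def cubeContraction (i : ι) : Module.End R ((ι → ℤ) →₀ R) :=
  koszulCoord i (lineContraction R)

theorem cubeBoundary_homotopy (i : ι) :
    cubeBoundary R ι * cubeContraction R i + cubeContraction R i * cubeBoundary R ι =
      1 - coord i (lineCollapse R) := by
  rw [cubeBoundary, Finset.sum_mul, Finset.mul_sum, ← Finset.sum_add_distrib,
    Finset.sum_eq_single i (fun j _ hj => ?_) (by simp)]
  · rw [cubeContraction, koszulCoord_mul_koszulCoord_self, koszulCoord_mul_koszulCoord_self,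
      ← map_add, lineContraction_homotopy, map_sub, map_one]
  · exact koszulCoord_anticomm hj edgeToVertex_lineBoundary.swapsParity
      vertexToEdge_lineContraction.swapsParity

theorem dimDiag_mul_cubeBoundary {f g : ℕ → R} (h : ∀ e, f e = g (e + 1)) :
    dimDiag ι f * cubeBoundary R ι = cubeBoundary R ι * dimDiag ι g := by
  rw [cubeBoundary, Finset.sum_mul, Finset.mul_sum]
  refine Finset.sum_congr rfl fun i _ => diag_mul_koszulCoord fun x m hm => ?_
  obtain ⟨hx, hm⟩ := edgeToVertex_lineBoundary _ _ hm
  rw [h, cubeDim_update_even hx hm]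

theorem dimDiag_mul_cubeContraction {f g : ℕ → R} (h : ∀ e, f (e + 1) = g e) (i : ι) :
    dimDiag ι f * cubeContraction R i = cubeContraction R i * dimDiag ι g := by
  refine diag_mul_koszulCoord fun x m hm => ?_
  obtain ⟨hx, hm⟩ := vertexToEdge_lineContraction _ _ hm
  rw [cubeDim_update_odd hx hm, h]

/-- The coefficient of the second differential of the double complex `totalBoundary v` on cells
of dimension `e` in total degree `n`. -/
def fiberCoeff (v : ℕ → R) (n e : ℕ) : R := (-1) ^ e * v (n - e)

theorem fiberCoeff_succ_succ (v : ℕ → R) (n e : ℕ) :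
    fiberCoeff v (n + 1) (e + 1) = -fiberCoeff v n e := by
  rw [fiberCoeff, fiberCoeff, Nat.add_sub_add_right, pow_succ]
  ring

theorem fiberCoeff_mul_fiberCoeff {v : ℕ → R} (v_zero : v 0 = 0)
    (v_mul_v : ∀ m, v m * v (m + 1) = 0) (n : ℕ) :
    fiberCoeff v n * fiberCoeff v (n + 1) = 0 := by
  ext e
  rcases le_or_gt e n with he | he
  · rw [Pi.mul_apply, fiberCoeff, fiberCoeff, mul_mul_mul_comm, Nat.sub_add_comm he, v_mul_v,
      mul_zero, Pi.zero_apply]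
  · simp [fiberCoeff, Nat.sub_eq_zero_of_le he.le, v_zero]

/-- The differential from degree `n` to degree `n - 1` of the tensor product of the cellular
chain complex of `ℝ^ι` with the complex `⋯ → R → R → R` whose differential in degree `m` is
multiplication by `v m`. A generator is recorded by its cell alone, the degree of the second
factor being `n` minus the dimension of the cell; the condition `v 0 = 0` makes the truncated
subtraction harmless. -/
noncomputable def totalBoundary (ι : Type) [LinearOrder ι] [Fintype ι] (v : ℕ → R) (n : ℕ) :
    Module.End R ((ι → ℤ) →₀ R) :=
  cubeBoundary R ι + dimDiag ι (fiberCoeff v n)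

theorem dimDiag_fiberCoeff_mul_cubeBoundary (v : ℕ → R) (n : ℕ) :
    dimDiag ι (fiberCoeff v n) * cubeBoundary R ι =
      -(cubeBoundary R ι * dimDiag ι (fiberCoeff v (n + 1))) := by
  rw [← mul_neg, ← dimDiag_neg]
  exact dimDiag_mul_cubeBoundary fun e => by simp [fiberCoeff_succ_succ]

theorem dimDiag_fiberCoeff_mul_cubeContraction (v : ℕ → R) (n : ℕ) (i : ι) :
    dimDiag ι (fiberCoeff v (n + 1)) * cubeContraction R i =
      -(cubeContraction R i * dimDiag ι (fiberCoeff v n)) := by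
  rw [← mul_neg, ← dimDiag_neg]
  exact dimDiag_mul_cubeContraction (fun e => by simp [fiberCoeff_succ_succ]) i

theorem totalBoundary_mul_totalBoundary {v : ℕ → R} (v_zero : v 0 = 0)
    (v_mul_v : ∀ m, v m * v (m + 1) = 0) (n : ℕ) :
    totalBoundary ι v n * totalBoundary ι v (n + 1) = 0 := by
  rw [totalBoundary, totalBoundary, add_mul, mul_add, mul_add, cubeBoundary_mul_self,
    dimDiag_fiberCoeff_mul_cubeBoundary, dimDiag_mul_dimDiag,
    fiberCoeff_mul_fiberCoeff v_zero v_mul_v]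
  simp [dimDiag_zero]

theorem totalBoundary_homotopy (v : ℕ → R) (n : ℕ) (i : ι) :
    totalBoundary ι v (n + 1) * cubeContraction R i +
      cubeContraction R i * totalBoundary ι v n = 1 - coord i (lineCollapse R) := by
  rw [← cubeBoundary_homotopy, totalBoundary, totalBoundary, add_mul, mul_add,
    dimDiag_fiberCoeff_mul_cubeContraction]
  abel

theorem dimTrunc_mul_totalBoundary {v : ℕ → R} (v_zero : v 0 = 0) (n : ℕ) :
    dimTrunc R ι n * totalBoundary ι v (n + 1) =
      totalBoundary ι v (n + 1) * dimTrunc R ι (n + 1) := by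
  rw [totalBoundary, mul_add, add_mul, dimTrunc, dimTrunc,
    dimDiag_mul_cubeBoundary (g := fun e => if e ≤ n + 1 then 1 else 0) fun e => by simp,
    dimDiag_mul_dimDiag, dimDiag_mul_dimDiag]
  congr 2
  ext e
  rcases lt_trichotomy e (n + 1) with he | rfl | he
  · simp [Nat.le_of_lt_succ he, he.le]
  · simp [fiberCoeff, v_zero]
  · simp [show ¬e ≤ n by lia, show ¬e ≤ n + 1 by lia]

end TotalComplex

section Exactness

variable {R : Type} [CommRing R] {ι : Type}

theorem exists_of_coord_lineCollapse_ne_zero [DecidableEq ι] {i : ι} {z : (ι → ℤ) →₀ R}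
    {c : ι → ℤ} (h : coord i (lineCollapse R) z c ≠ 0) :
    ∃ b, z b ≠ 0 ∧ c = Function.update b i 0 := by
  rw [coord, RingHom.coe_mk, MonoidHom.coe_mk, OneHom.coe_mk, Finsupp.linearCombination_apply,
    Finsupp.sum, Finsupp.finsetSum_apply] at h
  obtain ⟨b, hb, hbc⟩ := Finset.exists_ne_zero_of_sum_ne_zero h
  refine ⟨b, Finsupp.mem_support_iff.1 hb, by_contra fun hc => hbc ?_⟩
  by_cases hbi : Even (b i) <;> simp [lineCollapse, hbi, Finsupp.mapDomain_single, hc]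

variable [Fintype ι]

theorem cubeDim_zero : cubeDim (0 : ι → ℤ) = 0 := by
  simp [cubeDim]

variable (R ι) in
/-- The augmentation of the cellular chain complex of `ℝ^ι`, summing the coefficients of the
vertices. -/
noncomputable def vertexSum : ((ι → ℤ) →₀ R) →ₗ[R] R :=
  Finsupp.linearCombination R fun x => if cubeDim x = 0 then 1 else 0

theorem vertexSum_single (x : ι → ℤ) (r : R) :
    vertexSum R ι (Finsupp.single x r) = if cubeDim x = 0 then r else 0 := by
  simp [vertexSum]

variable [LinearOrder ι]

theorem exists_homologous_vanishing_off {v : ℕ → R} (v_zero : v 0 = 0)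
    (v_mul_v : ∀ m, v m * v (m + 1) = 0) (n : ℕ) {x : (ι → ℤ) →₀ R}
    (hx : totalBoundary ι v n x = 0) (s : Finset ι) :
    ∃ y z, x = z + totalBoundary ι v (n + 1) y ∧ totalBoundary ι v n z = 0 ∧
      ∀ c, z c ≠ 0 → ∀ j ∈ s, c j = 0 := by
  induction s using Finset.induction_on with
  | empty => exact ⟨0, x, by simp, hx, by simp⟩
  | insert i s _ ih =>
    obtain ⟨y, z, rfl, hz, z_off⟩ := ih
    have homotopy := LinearMap.congr_fun (totalBoundary_homotopy v n i) z
    simp only [LinearMap.add_apply, Module.End.mul_apply, LinearMap.sub_apply,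
      Module.End.one_apply, hz, map_zero, add_zero] at homotopy
    refine ⟨y + cubeContraction R i z, coord i (lineCollapse R) z, ?_, ?_, fun c hc => ?_⟩
    · rw [map_add, homotopy]
      abel
    · rw [← sub_sub_cancel z (coord i (lineCollapse R) z), ← homotopy, map_sub, hz,
        ← Module.End.mul_apply, totalBoundary_mul_totalBoundary v_zero v_mul_v,
        LinearMap.zero_apply, sub_zero]
    · obtain ⟨b, hb, rfl⟩ := exists_of_coord_lineCollapse_ne_zero hc
      intro j hj
      rcases eq_or_ne j i with rfl | hji
      · simp
      · rw [Function.update_of_ne hji, z_off b hb j (Finset.mem_of_mem_insert_of_ne hj hji)]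

theorem exists_homologous_single_zero {v : ℕ → R} (v_zero : v 0 = 0)
    (v_mul_v : ∀ m, v m * v (m + 1) = 0) (n : ℕ) {x : (ι → ℤ) →₀ R}
    (hx : totalBoundary ι v n x = 0) :
    ∃ y r, x = Finsupp.single 0 r + totalBoundary ι v (n + 1) y ∧
      totalBoundary ι v n (Finsupp.single 0 r) = 0 := by
  obtain ⟨y, z, hxz, hz, z_off⟩ :=
    exists_homologous_vanishing_off v_zero v_mul_v n hx Finset.univ
  have z_eq : z = Finsupp.single 0 (z 0) := by
    ext c
    rcases eq_or_ne c 0 with rfl | hc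
    · simp
    · rw [Finsupp.single_eq_of_ne hc]
      exact by_contra fun h => hc (funext fun j => z_off c h j (Finset.mem_univ j))
  exact ⟨y, z 0, z_eq ▸ hxz, z_eq ▸ hz⟩

theorem cubeBoundary_single (x : ι → ℤ) : cubeBoundary R ι (Finsupp.single x 1) =
    ∑ i, if Odd (x i) then
      Finsupp.single (Function.update x i (x i + 1)) ((koszulSign i x : ℤ) : R) -
        Finsupp.single (Function.update x i (x i - 1)) ((koszulSign i x : ℤ) : R)
    else 0 := by
  simp only [cubeBoundary, LinearMap.sum_apply, koszulCoord, Module.End.mul_apply, diag_single,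
    one_mul]
  refine Finset.sum_congr rfl fun i _ => ?_
  rw [← Finsupp.smul_single_one, map_smul, coord_single, lineBoundary_single]
  split_ifs
  · rw [← Finsupp.lmapDomain_apply R R, map_sub]
    simp [smul_sub]
  · simp

theorem totalBoundary_single_zero (v : ℕ → R) (n : ℕ) (r : R) :
    totalBoundary ι v n (Finsupp.single 0 r) = Finsupp.single 0 (r * v n) := by
  rw [← Finsupp.smul_single_one, map_smul, totalBoundary, LinearMap.add_apply,
    cubeBoundary_single]
  simp [dimDiag, diag_single, fiberCoeff, cubeDim_zero]

theorem totalBoundary_exact {v : ℕ → R} (v_zero : v 0 = 0)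
    (v_mul_v : ∀ m, v m * v (m + 1) = 0) {n : ℕ}
    (v_exact : ∀ r, r * v n = 0 → ∃ s, s * v (n + 1) = r) {x : (ι → ℤ) →₀ R}
    (hx : totalBoundary ι v n x = 0) : ∃ y, totalBoundary ι v (n + 1) y = x := by
  obtain ⟨y, r, rfl, hr⟩ := exists_homologous_single_zero v_zero v_mul_v n hx
  rw [totalBoundary_single_zero, Finsupp.single_eq_zero] at hr
  obtain ⟨s, rfl⟩ := v_exact r hr
  exact ⟨Finsupp.single 0 s + y, by rw [map_add, totalBoundary_single_zero]⟩

theorem vertexSum_cubeBoundary (x : (ι → ℤ) →₀ R) :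
    vertexSum R ι (cubeBoundary R ι x) = 0 := by
  refine LinearMap.congr_fun (f := vertexSum R ι ∘ₗ cubeBoundary R ι) (g := 0)
    (Finsupp.basisSingleOne.ext fun c => ?_) x
  rw [Finsupp.coe_basisSingleOne, LinearMap.comp_apply, cubeBoundary_single, map_sum]
  refine Finset.sum_eq_zero fun i _ => ?_
  split_ifs with hi
  · have dim_eq : cubeDim (Function.update c i (c i + 1)) =
        cubeDim (Function.update c i (c i - 1)) :=
      Nat.add_right_cancel ((cubeDim_update_even hi hi.add_one).trans
        (cubeDim_update_even hi (hi.sub_odd odd_one)).symm)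
    rw [map_sub, vertexSum_single, vertexSum_single, dim_eq, sub_self]
  · simp

theorem vertexSum_totalBoundary (v : ℕ → R) (x : (ι → ℤ) →₀ R) :
    vertexSum R ι (totalBoundary ι v 1 x) = vertexSum R ι x * v 1 := by
  rw [totalBoundary, LinearMap.add_apply, map_add, vertexSum_cubeBoundary, zero_add]
  induction x using Finsupp.induction_linear with
  | zero => simp
  | add x y hx hy => rw [map_add, map_add, hx, hy, map_add, add_mul]
  | single c r =>
    rw [dimDiag, diag_single, vertexSum_single, vertexSum_single]
    split_ifs with hc <;> simp [fiberCoeff, hc]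

theorem totalBoundary_zero_mul_dimTrunc {v : ℕ → R} (v_zero : v 0 = 0) :
    totalBoundary ι v 0 * dimTrunc R ι 0 = 0 := by
  have fiber_zero : fiberCoeff v 0 = 0 := by
    ext e
    simp [fiberCoeff, v_zero]
  rw [totalBoundary, fiber_zero, dimDiag_zero, add_zero, dimTrunc,
    ← dimDiag_mul_cubeBoundary (f := 0) fun e => by simp, dimDiag_zero, zero_mul]

theorem totalBoundary_exact_zero {v : ℕ → R} (v_zero : v 0 = 0)
    (v_mul_v : ∀ m, v m * v (m + 1) = 0) {x : (ι → ℤ) →₀ R} (hx : dimTrunc R ι 0 x = x)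
    (sum_mem : vertexSum R ι x ∈ Ideal.span {v 1}) : ∃ y, totalBoundary ι v 1 y = x := by
  have cycle : totalBoundary ι v 0 x = 0 := by
    rw [← hx, ← Module.End.mul_apply, totalBoundary_zero_mul_dimTrunc v_zero,
      LinearMap.zero_apply]
  obtain ⟨y, r, rfl, -⟩ := exists_homologous_single_zero v_zero v_mul_v 0 cycle
  rw [map_add, vertexSum_single, cubeDim_zero, if_pos rfl, vertexSum_totalBoundary,
    Ideal.add_mem_iff_left _ (Ideal.mul_mem_left _ _ (Ideal.mem_span_singleton_self _))] at sum_mem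
  obtain ⟨s, rfl⟩ := Ideal.mem_span_singleton'.1 sum_mem
  exact ⟨Finsupp.single 0 s + y, by rw [map_add, totalBoundary_single_zero]⟩

end Exactness

section CyclicGroupRing

open AddMonoidAlgebra

variable (k : Type) [CommRing k] (q : ℕ)

/-- The difference `T - 1` in the group ring of `ℤ/q`, where `T` is the generator of `ℤ/q`. -/
noncomputable def cyclicDiff : k[ZMod q] := single 1 1 - 1

/-- The augmentation `T ↦ 1` of the group ring of `ℤ/q`. -/
noncomputable def cyclicAug : k[ZMod q] →ₐ[k] k := lift k k (ZMod q) 1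

variable {k q}

theorem cyclicAug_single (c : ZMod q) (a : k) : cyclicAug k q (single c a) = a := by
  simp [cyclicAug]

theorem cyclicAug_cyclicDiff : cyclicAug k q (cyclicDiff k q) = 0 := by
  rw [cyclicDiff, map_sub, cyclicAug_single, map_one, sub_self]

variable [NeZero q]

theorem cyclicDiff_dvd_single_sub_one (c : ZMod q) : cyclicDiff k q ∣ single c 1 - 1 := by
  have single_eq_pow : (single c 1 : k[ZMod q]) = single 1 1 ^ c.val := by
    rw [single_pow, one_pow, nsmul_one, ZMod.natCast_zmod_val]
  rw [single_eq_pow]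
  exact sub_one_dvd_pow_sub_one _ _

theorem mem_span_cyclicDiff {r : k[ZMod q]} (hr : cyclicAug k q r = 0) :
    r ∈ Ideal.span {cyclicDiff k q} := by
  have sub_aug_mem (r : k[ZMod q]) :
      r - algebraMap k _ (cyclicAug k q r) ∈ Ideal.span {cyclicDiff k q} := by
    induction r using AddMonoidAlgebra.induction_linear with
    | zero => simp
    | add r s hr hs => simpa [add_sub_add_comm] using add_mem hr hs
    | single c a =>
      have factor : AddMonoidAlgebra.single c a - algebraMap k _ a =
          algebraMap k _ a * (AddMonoidAlgebra.single c 1 - 1) := by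
        simp [mul_sub, single_mul_single]
      rw [cyclicAug_single, factor]
      exact Ideal.mul_mem_left _ _ (Ideal.mem_span_singleton.2 (cyclicDiff_dvd_single_sub_one c))
  simpa [hr] using sub_aug_mem r

variable (k q) in
/-- The norm `1 + T + ⋯ + T ^ (q - 1)` in the group ring of `ℤ/q`. -/
noncomputable def cyclicNorm : k[ZMod q] := ∑ c, single c 1

theorem coeff_cyclicNorm (c : ZMod q) : (cyclicNorm k q).coeff c = 1 := by
  simp [cyclicNorm, Finsupp.single_apply]

theorem mul_cyclicNorm (r : k[ZMod q]) : r * cyclicNorm k q = cyclicAug k q r • cyclicNorm k q := by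
  induction r using AddMonoidAlgebra.induction_linear with
  | zero => simp
  | add r s hr hs => rw [add_mul, hr, hs, map_add, add_smul]
  | single c a =>
    rw [cyclicAug_single]
    ext b
    simp [coeff_cyclicNorm]

theorem exists_mul_cyclicDiff {r : k[ZMod q]} (hr : r * cyclicNorm k q = 0) :
    ∃ s, s * cyclicDiff k q = r := by
  refine Ideal.mem_span_singleton'.1 (mem_span_cyclicDiff ?_)
  simpa [mul_cyclicNorm, coeff_cyclicNorm] using
    congrArg (fun r : k[ZMod q] => r.coeff 0) hr

theorem exists_mul_cyclicNorm {r : k[ZMod q]} (hr : r * cyclicDiff k q = 0) :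
    ∃ s, s * cyclicNorm k q = r := by
  have coeff_succ (c : ZMod q) : r.coeff (c + 1) = r.coeff c := by
    have := congrArg (fun r : k[ZMod q] => r.coeff (c + 1)) hr
    exact (sub_eq_zero.1 (by simpa [cyclicDiff, mul_sub] using this)).symm
  have coeff_natCast (c : ℕ) : r.coeff c = r.coeff 0 := by
    induction c with
    | zero => simp
    | succ c ih => rw [Nat.cast_succ, coeff_succ, ih]
  refine ⟨algebraMap k _ (r.coeff 0), ?_⟩
  ext c
  rw [← Algebra.smul_def, ← ZMod.natCast_zmod_val c, coeff_natCast]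
  simp [coeff_cyclicNorm]

variable (k q) in
/-- The differentials of the periodic resolution of `k` over the group ring of `ℤ/q`. -/
noncomputable def periodicCoeff : ℕ → k[ZMod q]
  | 0 => 0
  | m + 1 => if Even m then cyclicDiff k q else cyclicNorm k q

theorem periodicCoeff_mul_succ (m : ℕ) :
    periodicCoeff k q m * periodicCoeff k q (m + 1) = 0 := by
  have diff_mul_norm : cyclicDiff k q * cyclicNorm k q = 0 := by
    rw [mul_cyclicNorm, cyclicAug_cyclicDiff, zero_smul]
  cases m with
  | zero => simp [periodicCoeff]
  | succ m => by_cases hm : Even m <;>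
      simp [periodicCoeff, hm, Nat.even_add_one, diff_mul_norm, mul_comm (cyclicNorm k q)]

theorem exists_mul_periodicCoeff {m : ℕ} {r : k[ZMod q]}
    (hr : r * periodicCoeff k q (m + 1) = 0) : ∃ s, s * periodicCoeff k q (m + 2) = r := by
  by_cases hm : Even m <;> simp only [periodicCoeff, hm, Nat.even_add_one, not_true, not_false_iff,
    if_true, if_false] at hr ⊢
  · exact exists_mul_cyclicNorm hr
  · exact exists_mul_cyclicDiff hr

end CyclicGroupRing

section Monomial

variable {R : Type} [CommRing R] {X : Type}

/-- The operator sending the basis element `x` to `u x` times the basis element `s x`. -/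
noncomputable def monomial (s : X → X) (u : X → R) : Module.End R (X →₀ R) :=
  Finsupp.linearCombination R fun x => Finsupp.single (s x) (u x)

theorem monomial_single (s : X → X) (u : X → R) (x : X) (r : R) :
    monomial s u (Finsupp.single x r) = Finsupp.single (s x) (r * u x) := by
  simp [monomial]

theorem monomial_id_one : monomial id (1 : X → R) = 1 :=
  end_ext_single fun x => by simp [monomial_single]

theorem monomial_mul_monomial (s t : X → X) (u v : X → R) :
    monomial s u * monomial t v = monomial (s ∘ t) fun x => v x * u (t x) :=
  end_ext_single fun x => by simp [monomial_single]

variable {ι : Type}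

/-- The map `s` of cells is, up to even translation, the signed permutation of coordinates given
by `π` and `ε`. -/
def IsSignedPerm (π : Equiv.Perm ι) (ε : ι → ℤˣ) (s : (ι → ℤ) → ι → ℤ) : Prop :=
  ∃ w : ι → ℤ, ∀ x i, s x (π i) = ε i * x i + 2 * w i

variable {π : Equiv.Perm ι} {ε : ι → ℤˣ} {s : (ι → ℤ) → ι → ℤ}

theorem IsSignedPerm.odd_iff (hs : IsSignedPerm π ε s) (x : ι → ℤ) (i : ι) :
    Odd (s x (π i)) ↔ Odd (x i) := by
  obtain ⟨w, hw⟩ := hs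
  rw [hw]
  rcases Int.units_eq_one_or (ε i) with h | h <;> simp [h, Int.odd_add]

theorem IsSignedPerm.map_update [DecidableEq ι] (hs : IsSignedPerm π ε s) (x : ι → ℤ) (i : ι)
    (d : ℤ) : s (Function.update x i (x i + d)) =
      Function.update (s x) (π i) (s x (π i) + ε i * d) := by
  obtain ⟨w, hw⟩ := hs
  refine funext fun j => ?_
  obtain ⟨j, rfl⟩ := π.surjective j
  rcases eq_or_ne j i with rfl | hj
  · simp only [hw, Function.update_self]
    ring
  · rw [hw, Function.update_of_ne hj, Function.update_of_ne (π.injective.ne hj), hw]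

variable [Fintype ι]

theorem commute_monomial_dimDiag {s : (ι → ℤ) → ι → ℤ} (hs : ∀ x, cubeDim (s x) = cubeDim x)
    (u : (ι → ℤ) → R) (f : ℕ → R) : Commute (monomial s u) (dimDiag ι f) :=
  end_ext_single fun x => by
    simp [dimDiag, diag_single, monomial_single, hs, mul_comm]

theorem vertexSum_monomial {s : (ι → ℤ) → ι → ℤ} (hs : ∀ x, cubeDim (s x) = cubeDim x)
    {u : (ι → ℤ) → R} {r : R} (hu : ∀ x, cubeDim x = 0 → u x = r) (y : (ι → ℤ) →₀ R) :
    vertexSum R ι (monomial s u y) = r * vertexSum R ι y := by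
  induction y using Finsupp.induction_linear with
  | zero => simp
  | add y z hy hz => rw [map_add, map_add, map_add, mul_add, hy, hz]
  | single x a =>
    rw [monomial_single, vertexSum_single, vertexSum_single, hs]
    split_ifs with hx
    · rw [hu x hx, mul_comm]
    · rw [mul_zero]

theorem IsSignedPerm.cubeDim_eq (hs : IsSignedPerm π ε s) (x : ι → ℤ) :
    cubeDim (s x) = cubeDim x := by
  refine (Finset.card_equiv π fun i => ?_).symm
  simp [hs.odd_iff]

theorem IsSignedPerm.commute_cubeBoundary [LinearOrder ι] (hs : IsSignedPerm π ε s)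
    {u : (ι → ℤ) → R} (hu : ∀ x i d, Odd (x i) → Odd d →
      koszulSign i x * u (Function.update x i (x i + d)) =
        ε i * koszulSign (π i) (s x) * u x) :
    Commute (monomial s u) (cubeBoundary R ι) := by
  refine end_ext_single fun x => ?_
  rw [Module.End.mul_apply, Module.End.mul_apply, cubeBoundary_single, monomial_single, one_mul,
    ← Finsupp.smul_single_one (s x), map_smul, cubeBoundary_single, map_sum, Finset.smul_sum]
  refine Fintype.sum_equiv π _ _ fun i => ?_
  simp only [hs.odd_iff]
  split_ifs with hi
  swap
  · rw [map_zero, smul_zero]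
  have hu_add := hu x i 1 hi odd_one
  have hu_sub := hu x i (-1) hi (by decide)
  rw [map_sub, monomial_single, monomial_single, sub_eq_add_neg (x i), hs.map_update,
    hs.map_update, smul_sub, Finsupp.smul_single, Finsupp.smul_single, hu_add, hu_sub,
    smul_eq_mul]
  rcases Int.units_eq_one_or (ε i) with h | h <;>
    simp [h, sub_eq_add_neg, mul_comm (u x), add_comm]

end Monomial

section CrystalHom

variable {n q : ℕ} [NeZero q] {M : Matrix (Fin n) (Fin n) ℤ} {hq : M ^ q = 1}

variable {K : Type} [Group K]

/-- The homomorphism out of `ℤ^n ⋊ ℤ/q` which is `f` on the lattice and sends the generator of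
`ℤ/q` to `α`. -/
def crysHom (f : Lat n →* K) (α : K) (hα : α ^ q = 1)
    (conj : ∀ l : Fin n → ℤ, α * f (.ofAdd l) = f (.ofAdd (M *ᵥ l)) * α) : Crys q M hq →* K :=
  SemidirectProduct.lift f (zmodHom q α hα) fun c => by
    have conj_pow (m : ℕ) (A : MulAut (Lat n)) (hA : ∀ l, α * f l = f (A l) * α) (l : Lat n) :
        α ^ m * f l = f ((A ^ m) l) * α ^ m := by
      induction m generalizing l with
      | zero => simp
      | succ m ih => rw [pow_succ, mul_assoc, hA, ← mul_assoc, ih, mul_assoc, pow_succ A,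
          MulAut.mul_apply]
    ext l
    refine eq_mul_inv_of_mul_eq (conj_pow c.toAdd.val (glToAut n _) (fun l => ?_) l).symm
    exact conj l.toAdd

end CrystalHom

section CubeResolution

open AddMonoidAlgebra

variable {k : Type} [CommRing k] {q : ℕ} {ι : Type} [LinearOrder ι] [Fintype ι]

variable (k q ι) in
/-- The operators on cubical chains over `k[ℤ/q]` that commute with the cubical boundary, respect
the grading by dimension, and preserve the sum of the augmentations of the vertex coefficients. -/
def cellularOperators : Submonoid (Module.End k[ZMod q] ((ι → ℤ) →₀ k[ZMod q])) where
  carrier := {φ | Commute φ (cubeBoundary _ ι) ∧ (∀ f, Commute φ (dimDiag ι f)) ∧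
    ∀ x, cyclicAug k q (vertexSum _ ι (φ x)) = cyclicAug k q (vertexSum _ ι x)}
  one_mem' := ⟨Commute.one_left _, fun _ => Commute.one_left _, fun _ => rfl⟩
  mul_mem' := fun hφ hψ => ⟨hφ.1.mul_left hψ.1, fun f => (hφ.2.1 f).mul_left (hψ.2.1 f),
    fun x => (hφ.2.2 _).trans (hψ.2.2 x)⟩

variable {G : Type} [Group G]

/-- The representation over the coefficient ring given by operators over a larger ring. -/
def restrictRep (k : Type) [CommRing k] {S E : Type} [CommRing S] [Algebra k S] [AddCommGroup E]
    [Module k E] [Module S E] [IsScalarTower k S E] (θ : G →* Module.End S E) :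
    Representation k G E where
  toFun g := (θ g).restrictScalars k
  map_one' := by rw [map_one]; rfl
  map_mul' g h := by rw [map_mul]; rfl

variable [NeZero q]

/-- The tensor product of the cubical chains of `ℝ^ι` with the periodic resolution of `ℤ/q`, as a
resolution of the trivial module of any group acting through cellular operators. -/
noncomputable def cubeResolution (θ : G →* Module.End k[ZMod q] ((ι → ℤ) →₀ k[ZMod q]))
    (hθ : ∀ g, θ g ∈ cellularOperators k q ι) : TruncatedResolution (restrictRep k θ) where
  d n := (totalBoundary ι (periodicCoeff k q) (n + 1)).restrictScalars k
  trunc n := (dimTrunc _ ι n).restrictScalars k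
  aug := (cyclicAug k q).toLinearMap ∘ₗ (vertexSum _ ι).restrictScalars k
  d_rho n g x := by
    have comm : Commute (θ g) (totalBoundary ι (periodicCoeff k q) (n + 1)) :=
      (hθ g).1.add_right ((hθ g).2.1 _)
    exact LinearMap.congr_fun comm.symm.eq x
  trunc_rho n g x := by
    have comm : Commute (θ g) (dimTrunc _ ι n) := (hθ g).2.1 _
    exact LinearMap.congr_fun comm.symm.eq x
  aug_rho g x := (hθ g).2.2 x
  trunc_trunc n x := by
    have idem := dimTrunc_mul_self (R := k[ZMod q]) (ι := ι) n
    exact LinearMap.congr_fun idem x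
  trunc_d n x := by
    have comm := dimTrunc_mul_totalBoundary (ι := ι) (v := periodicCoeff k q) rfl n
    exact LinearMap.congr_fun comm x
  d_d n x := by
    have sq_zero := totalBoundary_mul_totalBoundary (ι := ι) rfl
      (periodicCoeff_mul_succ (k := k) (q := q)) (n + 1)
    exact LinearMap.congr_fun sq_zero x
  aug_d x := by
    change cyclicAug k q (vertexSum _ ι (totalBoundary ι (periodicCoeff k q) 1 x)) = 0
    rw [vertexSum_totalBoundary, map_mul]
    exact mul_eq_zero_of_right _ cyclicAug_cyclicDiff
  exists_aug_trunc := ⟨Finsupp.single 0 1, by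
    simp [dimTrunc, dimDiag, diag_single, vertexSum_single, cubeDim_zero]⟩
  exact_zero x hx aug_x := by
    refine totalBoundary_exact_zero rfl periodicCoeff_mul_succ hx ?_
    exact mem_span_cyclicDiff aug_x
  exact_succ n x hx := totalBoundary_exact rfl periodicCoeff_mul_succ
    (fun _ => exists_mul_periodicCoeff) hx

end CubeResolution

section Translation

variable {A : Type} [AddCommGroup A] {ι : Type}

/-- The action of a lattice, embedded in `ℤ^ι` by `B`, on cubical chains by the translations by
`B l`. A cell has doubled coordinates, so its coordinates change by `2 * B l`. -/
noncomputable def translationHom (R : Type) [CommRing R] (B : A →+ (ι → ℤ)) :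
    Multiplicative A →* Module.End R ((ι → ℤ) →₀ R) where
  toFun l := monomial (· + 2 • B l.toAdd) 1
  map_one' := by
    rw [← monomial_id_one]
    congr 1
    ext
    simp
  map_mul' l m := by
    rw [monomial_mul_monomial]
    congr 1
    · ext x
      simp [smul_add, add_assoc, add_comm (2 * B m.toAdd _)]
    · ext
      simp

theorem translationHom_single (R : Type) [CommRing R] (B : A →+ (ι → ℤ)) (l : Multiplicative A)
    (x : ι → ℤ) (r : R) : translationHom R B l (Finsupp.single x r) =
      Finsupp.single (x + 2 • B l.toAdd) r := by
  rw [translationHom, MonoidHom.coe_mk, OneHom.coe_mk, monomial_single, Pi.one_apply, mul_one]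

end Translation

section SignedPermutationOperators

open AddMonoidAlgebra

variable {k : Type} [CommRing k] {q : ℕ} {ι : Type} [LinearOrder ι] [Fintype ι]

theorem IsSignedPerm.monomial_mem_cellularOperators {π : Equiv.Perm ι} {ε : ι → ℤˣ}
    {s : (ι → ℤ) → ι → ℤ} (hs : IsSignedPerm π ε s) {u : (ι → ℤ) → k[ZMod q]}
    (hu : ∀ x i d, Odd (x i) → Odd d → koszulSign i x * u (Function.update x i (x i + d)) =
      ε i * koszulSign (π i) (s x) * u x)
    {r : k[ZMod q]} (hr : cyclicAug k q r = 1) (u_vertex : ∀ x, cubeDim x = 0 → u x = r) :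
    monomial s u ∈ cellularOperators k q ι :=
  ⟨hs.commute_cubeBoundary hu, commute_monomial_dimDiag hs.cubeDim_eq u, fun x => by
    rw [vertexSum_monomial hs.cubeDim_eq u_vertex, map_mul, hr, one_mul]⟩

variable {A : Type} [AddCommGroup A]

theorem translationHom_mem_cellularOperators (B : A →+ (ι → ℤ)) (l : Multiplicative A) :
    translationHom k[ZMod q] B l ∈ cellularOperators k q ι := by
  have signed : IsSignedPerm 1 1 (· + 2 • B l.toAdd) := ⟨B l.toAdd, fun x i => by simp⟩
  refine signed.monomial_mem_cellularOperators (fun x i d _ _ => ?_) (map_one _) fun _ _ => rfl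
  have koszul_add : koszulSign i (x + 2 • B l.toAdd) = koszulSign i x := by
    simp [koszulSign, Finset.sum_add_distrib, ← Finset.mul_sum, Int.negOnePow_add]
  simp only [Equiv.Perm.one_apply, koszul_add]
  simp

end SignedPermutationOperators

section FreeBasis

variable {k : Type} [CommRing k] {G : Type} [Group G] {E : Type} [AddCommGroup E] [Module k E]
  {ι κ : Type} {ρ : Representation k G E}

theorem exists_isFreeBasis (b : Module.Basis κ k E) {p : ι → E} {m : G × ι → κ}
    (hm : Function.Bijective m) {u : G × ι → kˣ}
    (rho_p : ∀ g i, ρ g (p i) = u (g, i) • b (m (g, i))) :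
    ∃ B : Module.Basis (G × ι) k E, IsFreeBasis ρ B ∧ ∀ i, B (1, i) = p i := by
  let B := (b.reindex (Equiv.ofBijective m hm).symm).unitsSMul u
  have B_apply (g : G) (i : ι) : B (g, i) = ρ g (p i) := by
    rw [Module.Basis.unitsSMul_apply, Module.Basis.reindex_apply, rho_p, Equiv.symm_symm,
      Equiv.ofBijective_apply]
  refine ⟨B, fun h g i => ?_, fun i => ?_⟩
  · rw [B_apply, B_apply, map_mul, Module.End.mul_apply]
  · rw [B_apply, map_one, Module.End.one_apply]

end FreeBasis

section RotationAction

open AddMonoidAlgebra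

/-- The embedding of `ℤ^5` onto the lattice `D₅` of integer vectors with even coordinate sum. -/
def latticeEmbedding : (Fin 5 → ℤ) →+ (Fin 5 → ℤ) :=
  .mk' (fun l => ![l 0 - l 1 + l 2 - l 3 + l 4, l 0 - l 4, l 1, l 2, l 3]) fun l m => by
    ext i
    fin_cases i <;> simp <;> ring

theorem latticeEmbedding_apply (l : Fin 5 → ℤ) :
    latticeEmbedding l = ![l 0 - l 1 + l 2 - l 3 + l 4, l 0 - l 4, l 1, l 2, l 3] :=
  rfl

/-- The signed permutation to which `latticeEmbedding` conjugates the holonomy matrix. -/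
def rotation (x : Fin 5 → ℤ) : Fin 5 → ℤ := ![-x 0, -x 4, x 1, x 2, x 3]

theorem rotation_add_two_smul (x w : Fin 5 → ℤ) :
    rotation (x + 2 • w) = rotation x + 2 • rotation w := by
  ext i
  fin_cases i <;> simp [rotation, add_comm]

theorem rotation_latticeEmbedding (l : Fin 5 → ℤ) :
    rotation (latticeEmbedding l) = latticeEmbedding (holM *ᵥ l) := by
  ext i
  fin_cases i <;> simp [rotation, latticeEmbedding_apply, holM, dotProduct,
    Fin.sum_univ_succ] <;> ring

theorem rotation_iterate_four (x : Fin 5 → ℤ) :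
    rotation^[4] x = ![x 0, -x 1, -x 2, -x 3, -x 4] := by
  have unfolded : rotation^[4] x = ![- - - -x 0, -x 1, -x 2, -x 3, -x 4] := rfl
  simpa using unfolded

theorem rotation_iterate_eight (x : Fin 5 → ℤ) : rotation^[8] x = x := by
  rw [Function.iterate_add_apply rotation 4 4, rotation_iterate_four, rotation_iterate_four]
  ext i
  fin_cases i <;> simp

/-- The sign by which `rotation` changes the orientation of a cell. -/
def rotationSign (x : Fin 5 → ℤ) : ℤˣ :=
  (x 0 + x 4 + x 4 * (x 1 + x 2 + x 3)).negOnePow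

/-- The permutation of the coordinates underlying `rotation`. -/
def rotationPerm : Equiv.Perm (Fin 5) where
  toFun := ![0, 2, 3, 4, 1]
  invFun := ![0, 4, 1, 2, 3]
  left_inv := by decide
  right_inv := by decide

theorem isSignedPerm_rotation : IsSignedPerm rotationPerm ![-1, 1, 1, 1, -1] rotation :=
  ⟨0, fun x i => by fin_cases i <;> simp [rotation, rotationPerm]⟩

theorem koszulSign_mul_rotationSign_update (x : Fin 5 → ℤ) (i : Fin 5) (d : ℤ) (hi : Odd (x i))
    (hd : Odd d) : koszulSign i x * rotationSign (Function.update x i (x i + d)) =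
      ![-1, 1, 1, 1, -1] i * koszulSign (rotationPerm i) (rotation x) * rotationSign x := by
  have sum_lt (y : Fin 5 → ℤ) (i : Fin 5) : ∑ j with j < i, y j =
      ![0, y 0, y 0 + y 1, y 0 + y 1 + y 2, y 0 + y 1 + y 2 + y 3] i := by
    rw [Finset.sum_filter, Fin.sum_univ_five]
    fin_cases i <;> simp
  have epsilon_eq : (![-1, 1, 1, 1, -1] : Fin 5 → ℤˣ) i =
      ((![1, 0, 0, 0, 1] : Fin 5 → ℤ) i).negOnePow := by
    clear hi
    decide +revert
  have not_even : ¬ Even (x i) := Int.not_even_iff_odd.2 hi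
  have not_even_d : ¬ Even d := Int.not_even_iff_odd.2 hd
  rw [epsilon_eq, koszulSign, koszulSign, rotationSign, rotationSign, ← Int.negOnePow_add,
    ← Int.negOnePow_add, ← Int.negOnePow_add, Int.negOnePow_eq_iff, sum_lt, sum_lt]
  fin_cases i <;> simp [Function.update, rotation, rotationPerm, Int.even_add, Int.even_sub,
    Int.even_mul] at not_even ⊢ <;> grind

theorem rotationSign_iterate_four (x : Fin 5 → ℤ) :
    rotationSign (rotation^[4] x) = rotationSign x := by
  rw [rotation_iterate_four, rotationSign, rotationSign, Int.negOnePow_eq_iff]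
  simp [Int.even_add, Int.even_sub, Int.even_mul]

theorem rotationSign_add_two_smul (x w : Fin 5 → ℤ) :
    rotationSign (x + 2 • w) = rotationSign x := by
  rw [rotationSign, rotationSign, Int.negOnePow_eq_iff]
  simp [Int.even_add, Int.even_sub, Int.even_mul]

theorem prod_rotationSign_iterate (x : Fin 5 → ℤ) :
    ∏ i ∈ Finset.range 8, rotationSign (rotation^[i] x) = 1 := by
  have four_add (i : ℕ) : rotationSign (rotation^[4 + i] x) = rotationSign (rotation^[i] x) := by
    rw [Function.iterate_add_apply, rotationSign_iterate_four]
  rw [Finset.prod_range_add _ 4 4, Finset.prod_congr rfl fun i _ => four_add i, ← sq,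
    Int.units_sq]

/-- `rotation` on cubical chains, combined with multiplication by the generator of `ℤ/8`. -/
noncomputable def rotationOp : Module.End ℤ[ZMod 8] ((Fin 5 → ℤ) →₀ ℤ[ZMod 8]) :=
  monomial rotation fun x => single 1 (rotationSign x : ℤ)

theorem rotationOp_pow_single (m : ℕ) (x : Fin 5 → ℤ) (c : ZMod 8) (a : ℤ) :
    (rotationOp ^ m) (Finsupp.single x (single c a)) = Finsupp.single (rotation^[m] x)
      (single (c + m) (a * (∏ i ∈ Finset.range m, rotationSign (rotation^[i] x) : ℤˣ))) := by
  induction m with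
  | zero => simp
  | succ m ih =>
    rw [pow_succ', Module.End.mul_apply, ih, rotationOp, monomial_single, single_mul_single,
      Function.iterate_succ_apply', Finset.prod_range_succ, Units.val_mul, Nat.cast_succ,
      add_assoc, mul_assoc]

theorem rotationOp_pow_eight : rotationOp ^ 8 = 1 :=
  end_ext_single fun x => by
    rw [one_def, rotationOp_pow_single, rotation_iterate_eight, prod_rotationSign_iterate]
    simp [show (8 : ZMod 8) = 0 by decide]

theorem rotationOp_mem_cellularOperators : rotationOp ∈ cellularOperators ℤ 8 (Fin 5) := by
  refine isSignedPerm_rotation.monomial_mem_cellularOperators (fun x i d hi hd => ?_)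
    (cyclicAug_single 1 1) fun x hx => ?_
  · have intCast_mul (a b : ℤ) : (a : ℤ[ZMod 8]) * single 1 b = single 1 (a * b) := by
      rw [← zsmul_eq_mul, AddMonoidAlgebra.smul_single, smul_eq_mul]
    rw [mul_assoc, intCast_mul, intCast_mul, intCast_mul]
    have sign_eq := koszulSign_mul_rotationSign_update x i d hi hd
    rw [mul_assoc] at sign_eq
    exact_mod_cast congr(AddMonoidAlgebra.single (1 : ZMod 8) ($sign_eq : ℤ))
  · have even (i : Fin 5) : Even (x i) := by
      rw [cubeDim, Finset.card_eq_zero, Finset.filter_eq_empty_iff] at hx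
      exact Int.not_odd_iff_even.1 (hx (Finset.mem_univ i))
    rw [rotationSign, Int.negOnePow_even]
    · rfl
    · simp [Int.even_add, even]

theorem rotationOp_mul_translationHom (l : Fin 5 → ℤ) :
    rotationOp * translationHom ℤ[ZMod 8] latticeEmbedding (.ofAdd l) =
      translationHom ℤ[ZMod 8] latticeEmbedding (.ofAdd (holM *ᵥ l)) * rotationOp :=
  end_ext_single fun x => by
    rw [Module.End.mul_apply, Module.End.mul_apply, translationHom_single, rotationOp,
      monomial_single, monomial_single, translationHom_single, toAdd_ofAdd, toAdd_ofAdd,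
      rotation_add_two_smul, rotation_latticeEmbedding]
    rw [rotationSign_add_two_smul]

/-- The action of `ℤ^5 ⋊ ℤ/8` on the cubical chains of `ℝ^5` over `ℤ[ℤ/8]`. -/
noncomputable def chainAction :
    Crys 8 holM holM_pow →* Module.End ℤ[ZMod 8] ((Fin 5 → ℤ) →₀ ℤ[ZMod 8]) :=
  (Units.coeHom _).comp <|
    crysHom (translationHom ℤ[ZMod 8] latticeEmbedding).toHomUnits
      (Units.ofPowEqOne rotationOp 8 rotationOp_pow_eight (by decide))
      (Units.pow_ofPowEqOne _ _)
      fun l => Units.ext (rotationOp_mul_translationHom l)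

theorem chainAction_apply (g : Crys 8 holM holM_pow) :
    chainAction g = translationHom ℤ[ZMod 8] latticeEmbedding g.left *
      rotationOp ^ g.right.toAdd.val :=
  rfl

theorem chainAction_mem_cellularOperators (g : Crys 8 holM holM_pow) :
    chainAction g ∈ cellularOperators ℤ 8 (Fin 5) := by
  rw [chainAction_apply]
  exact mul_mem (translationHom_mem_cellularOperators _ _)
    (pow_mem rotationOp_mem_cellularOperators _)

end RotationAction

section Orbits

open AddMonoidAlgebra

/-- Representatives of the orbits of cells under translation by the lattice; the binary digits of
`j` are the class modulo the lattice and the parities of the coordinates. -/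
def orbitRep (j : Fin 64) : Fin 5 → ℤ :=
  let m : ℤ := j.val
  ![m / 2 % 2 + 2 * (m % 2), m / 4 % 2, m / 8 % 2, m / 16 % 2, m / 32 % 2]

/-- The orbit of a cell, in the numbering of `orbitRep`. -/
def orbitIndex (x : Fin 5 → ℤ) : Fin 64 :=
  Fin.ofNat 64 ((x 0 / 2 + x 1 / 2 + x 2 / 2 + x 3 / 2 + x 4 / 2) % 2 + 2 * (x 0 % 2) +
    4 * (x 1 % 2) + 8 * (x 2 % 2) + 16 * (x 3 % 2) + 32 * (x 4 % 2)).toNat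

theorem val_orbitIndex (x : Fin 5 → ℤ) : ((orbitIndex x).val : ℤ) =
    (x 0 / 2 + x 1 / 2 + x 2 / 2 + x 3 / 2 + x 4 / 2) % 2 + 2 * (x 0 % 2) + 4 * (x 1 % 2) +
      8 * (x 2 % 2) + 16 * (x 3 % 2) + 32 * (x 4 % 2) := by
  rw [orbitIndex, Fin.val_ofNat]
  omega

theorem orbitIndex_orbitRep (j : Fin 64) : orbitIndex (orbitRep j) = j := by
  decide +kernel +revert

theorem orbitIndex_add_lattice (x l : Fin 5 → ℤ) :
    orbitIndex (x + 2 • latticeEmbedding l) = orbitIndex x := by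
  rw [Fin.ext_iff, ← Int.natCast_inj, val_orbitIndex, val_orbitIndex]
  change (((x 0 + 2 * (l 0 - l 1 + l 2 - l 3 + l 4)) / 2 + (x 1 + 2 * (l 0 - l 4)) / 2 +
    (x 2 + 2 * l 1) / 2 + (x 3 + 2 * l 2) / 2 + (x 4 + 2 * l 3) / 2) % 2 +
    2 * ((x 0 + 2 * (l 0 - l 1 + l 2 - l 3 + l 4)) % 2) + 4 * ((x 1 + 2 * (l 0 - l 4)) % 2) +
    8 * ((x 2 + 2 * l 1) % 2) + 16 * ((x 3 + 2 * l 2) % 2) + 32 * ((x 4 + 2 * l 3) % 2)) = _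
  omega

theorem orbitRep_orbitIndex (x : Fin 5 → ℤ) : orbitRep (orbitIndex x) =
    ![x 0 % 2 + 2 * ((x 0 / 2 + x 1 / 2 + x 2 / 2 + x 3 / 2 + x 4 / 2) % 2), x 1 % 2, x 2 % 2,
      x 3 % 2, x 4 % 2] := by
  have digits {a b c d e f : ℤ} (ha : a = 0 ∨ a = 1) (hb : b = 0 ∨ b = 1) (hc : c = 0 ∨ c = 1)
      (hd : d = 0 ∨ d = 1) (he : e = 0 ∨ e = 1) (hf : f = 0 ∨ f = 1) :
      let m := a + 2 * b + 4 * c + 8 * d + 16 * e + 32 * f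
      ![m / 2 % 2 + 2 * (m % 2), m / 4 % 2, m / 8 % 2, m / 16 % 2, m / 32 % 2] =
        ![b + 2 * a, c, d, e, f] := by
    rcases ha with rfl | rfl <;> rcases hb with rfl | rfl <;> rcases hc with rfl | rfl <;>
      rcases hd with rfl | rfl <;> rcases he with rfl | rfl <;> rcases hf with rfl | rfl <;> decide
  rw [orbitRep, val_orbitIndex]
  apply digits <;> exact Int.emod_two_eq _

theorem exists_eq_orbitRep_add (x : Fin 5 → ℤ) :
    ∃ l, x = orbitRep (orbitIndex x) + 2 • latticeEmbedding l := by
  obtain ⟨w, hw, even_sum⟩ : ∃ w : Fin 5 → ℤ, x = orbitRep (orbitIndex x) + 2 • w ∧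
      (w 0 + w 1 + w 2 + w 3 + w 4) % 2 = 0 := by
    rw [orbitRep_orbitIndex]
    refine ⟨![x 0 / 2 - (x 0 / 2 + x 1 / 2 + x 2 / 2 + x 3 / 2 + x 4 / 2) % 2, x 1 / 2, x 2 / 2,
      x 3 / 2, x 4 / 2], funext fun i => ?_, ?_⟩
    · fin_cases i <;> simp <;> omega
    · change (x 0 / 2 - _ + x 1 / 2 + x 2 / 2 + x 3 / 2 + x 4 / 2) % 2 = 0
      omega
  refine ⟨![(w 0 + w 1 + w 2 - w 3 + w 4) / 2, w 2, w 3, w 4,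
    (w 0 - w 1 + w 2 - w 3 + w 4) / 2], hw.trans ?_⟩
  congr 2
  ext i
  fin_cases i <;> simp [latticeEmbedding_apply] <;> omega

theorem two_smul_latticeEmbedding_injective :
    Function.Injective fun l => 2 • latticeEmbedding l := by
  intro l m h
  have coord_eq (i : Fin 5) : 2 * latticeEmbedding l i = 2 * latticeEmbedding m i := by
    simpa using congrFun h i
  have h0 : 2 * (l 0 - l 1 + l 2 - l 3 + l 4) = 2 * (m 0 - m 1 + m 2 - m 3 + m 4) := coord_eq 0
  have h1 : 2 * (l 0 - l 4) = 2 * (m 0 - m 4) := coord_eq 1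
  have h2 : 2 * l 1 = 2 * m 1 := coord_eq 2
  have h3 : 2 * l 2 = 2 * m 2 := coord_eq 3
  have h4 : 2 * l 3 = 2 * m 3 := coord_eq 4
  ext i
  fin_cases i <;> simp only [Fin.reduceFinMk, Fin.isValue, Fin.zero_eta, Fin.mk_one] <;> omega

theorem rotation_iterate_add_lattice (m : ℕ) (x l : Fin 5 → ℤ) :
    rotation^[m] (x + 2 • latticeEmbedding l) =
      rotation^[m] x + 2 • latticeEmbedding (holM ^ m *ᵥ l) := by
  induction m with
  | zero => simp
  | succ m ih => rw [Function.iterate_succ_apply', ih, rotation_add_two_smul,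
      rotation_latticeEmbedding, Function.iterate_succ_apply', Matrix.mulVec_mulVec, ← pow_succ']

theorem leftInverse_rotation_iterate (c : ZMod 8) :
    Function.LeftInverse rotation^[8 - c.val] rotation^[c.val] := fun x => by
  rw [← Function.iterate_add_apply, Nat.sub_add_cancel c.val_lt.le, rotation_iterate_eight]

theorem rightInverse_rotation_iterate (c : ZMod 8) :
    Function.RightInverse rotation^[8 - c.val] rotation^[c.val] := fun x => by
  rw [← Function.iterate_add_apply, Nat.add_sub_cancel' c.val_lt.le, rotation_iterate_eight]

/-- The cell and the element of `ℤ/8` to which `g` moves the orbit representative `j` and `0`. -/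
def orbitMap (p : Crys 8 holM holM_pow × Fin 64) : (Fin 5 → ℤ) × ZMod 8 :=
  (rotation^[p.1.right.toAdd.val] (orbitRep p.2) + 2 • latticeEmbedding p.1.left.toAdd,
    p.1.right.toAdd)

theorem orbitMap_injective : Function.Injective orbitMap := by
  rintro ⟨⟨l, c⟩, i⟩ ⟨⟨l', c'⟩, j⟩ h
  obtain ⟨cell_eq, rfl : c = c'⟩ := Prod.ext_iff.1 h
  have index_eq (l : Fin 5 → ℤ) (i : Fin 64) : orbitIndex (rotation^[8 - c.toAdd.val]
      (rotation^[c.toAdd.val] (orbitRep i) + 2 • latticeEmbedding l)) = i := by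
    rw [rotation_iterate_add_lattice, leftInverse_rotation_iterate, orbitIndex_add_lattice,
      orbitIndex_orbitRep]
  obtain rfl : i = j := by
    rw [← index_eq l.toAdd i, ← index_eq l'.toAdd j]
    exact congrArg _ (congrArg _ cell_eq)
  obtain rfl : l = l' := two_smul_latticeEmbedding_injective (add_left_cancel cell_eq)
  rfl

theorem orbitMap_surjective : Function.Surjective orbitMap := fun ⟨x, c⟩ => by
  obtain ⟨l, hl⟩ := exists_eq_orbitRep_add (rotation^[8 - c.val] x)
  refine ⟨⟨⟨.ofAdd (holM ^ c.val *ᵥ l), .ofAdd c⟩, orbitIndex (rotation^[8 - c.val] x)⟩, ?_⟩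
  refine Prod.ext ?_ rfl
  change rotation^[c.val] _ + 2 • latticeEmbedding _ = x
  rw [toAdd_ofAdd, ← rotation_iterate_add_lattice, ← hl, rightInverse_rotation_iterate]

theorem exists_isFreeBasis_chainAction :
    ∃ B : Module.Basis (Crys 8 holM holM_pow × Fin 64) ℤ ((Fin 5 → ℤ) →₀ ℤ[ZMod 8]),
      IsFreeBasis (restrictRep ℤ chainAction) B ∧
        ∀ j, B (1, j) = Finsupp.single (orbitRep j) 1 := by
  refine exists_isFreeBasis
    ((AddMonoidAlgebra.basis (ZMod 8) ℤ).smulTower' (Finsupp.basisSingleOne (R := ℤ[ZMod 8])))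
    ⟨orbitMap_injective, orbitMap_surjective⟩
    (u := fun p => ∏ i ∈ Finset.range p.1.right.toAdd.val,
      rotationSign (rotation^[i] (orbitRep p.2)))
    fun g j => ?_
  change chainAction g _ = _
  rw [chainAction_apply, Module.End.mul_apply, one_def, rotationOp_pow_single,
    translationHom_single, Module.Basis.smulTower'_apply]
  simp [orbitMap, Units.smul_def]

end Orbits

/-- Integral linear forms `∑ c • v a` in variables indexed by `α`, as lists of pairs `(a, c)`. -/
abbrev LinForm (α : Type) : Type := List (α × ℤ)

namespace LinForm

variable {α : Type}

/-- The value of a linear form. -/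
def eval (f : LinForm α) (v : α → ℤ) : ℤ := (f.map fun p => p.2 * v p.1).sum

@[simp]
theorem eval_nil (v : α → ℤ) : eval [] v = 0 := rfl

@[simp]
theorem eval_cons (p : α × ℤ) (f : LinForm α) (v : α → ℤ) :
    eval (p :: f) v = p.2 * v p.1 + eval f v := by
  simp [eval]

@[simp]
theorem eval_zero (f : LinForm α) : eval f 0 = 0 := by
  simp [eval]

theorem eval_append (f g : LinForm α) (v : α → ℤ) : eval (f ++ g) v = eval f v + eval g v := by
  simp [eval]

theorem eval_flatMap {β : Type} (l : List β) (f : β → LinForm α) (v : α → ℤ) :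
    eval (l.flatMap f) v = (l.map fun b => eval (f b) v).sum := by
  induction l with
  | nil => rfl
  | cons b l ih => rw [List.flatMap_cons, eval_append, ih, List.map_cons, List.sum_cons]

theorem eval_congr {f : LinForm α} {v w : α → ℤ} (h : ∀ p ∈ f, v p.1 = w p.1) :
    eval f v = eval f w := by
  rw [eval, List.map_congr_left fun p hp => by rw [h p hp], eval]

variable [DecidableEq α]

/-- The total coefficient of the variable `a`. -/
def coeff (a : α) (f : LinForm α) : ℤ := ((f.filter (·.1 = a)).map Prod.snd).sum

/-- The terms not involving the variable `a`. -/
def erase (a : α) (f : LinForm α) : LinForm α := f.filter (·.1 ≠ a)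

/-- The sum of `c • v a` and a linear form, merging terms and dropping a vanishing one. -/
def addTerm (a : α) (c : ℤ) : LinForm α → LinForm α
  | [] => if c = 0 then [] else [(a, c)]
  | (b, e) :: f =>
    if a = b then if c + e = 0 then f else (b, c + e) :: f else (b, e) :: addTerm a c f

/-- The linear form `c • f + g`. -/
def addMul (c : ℤ) (f g : LinForm α) : LinForm α := f.foldr (fun p => addTerm p.1 (c * p.2)) g

/-- The result of substituting the form `r` for the variable `a` in `f`. -/
def subst (a : α) (r f : LinForm α) : LinForm α :=
  if coeff a f = 0 then erase a f else addMul (coeff a f) r (erase a f)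

/-- The solution for the variable `a` of the equation `f = 0`, where `a` has coefficient `c`. -/
def solve (a : α) (c : ℤ) (f : LinForm α) : LinForm α :=
  (erase a f).map fun p => (p.1, -(p.2 / c))

theorem eval_eq_coeff_mul_add (a : α) (f : LinForm α) (v : α → ℤ) :
    eval f v = coeff a f * v a + eval (erase a f) v := by
  induction f with
  | nil => simp [coeff, erase]
  | cons p f ih =>
    rw [eval_cons, ih]
    by_cases hp : p.1 = a
    · simp [coeff, erase, hp, add_mul, add_assoc]
    · simp [coeff, erase, hp, add_left_comm]

theorem eval_addTerm (a : α) (c : ℤ) (f : LinForm α) (v : α → ℤ) :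
    eval (addTerm a c f) v = c * v a + eval f v := by
  induction f with
  | nil =>
    rw [addTerm]
    split_ifs with hc <;> simp [hc]
  | cons p f ih =>
    rw [addTerm]
    split_ifs with ha hc
    · rw [eval_cons, ← add_assoc, ha, ← add_mul, hc, zero_mul, zero_add]
    · rw [eval_cons, eval_cons, ha, add_mul, add_assoc]
    · rw [eval_cons, eval_cons, ih, add_left_comm]

theorem eval_addMul (c : ℤ) (f g : LinForm α) (v : α → ℤ) :
    eval (addMul c f g) v = c * eval f v + eval g v := by
  induction f with
  | nil => simp [addMul]
  | cons p f ih =>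
    rw [addMul, List.foldr_cons, eval_addTerm, ← addMul, ih, eval_cons]
    ring

theorem eval_subst (a : α) (r f : LinForm α) (v : α → ℤ) :
    eval (subst a r f) v = coeff a f * eval r v + eval (erase a f) v := by
  rw [subst]
  split_ifs with ha
  · rw [ha, zero_mul, zero_add]
  · exact eval_addMul _ _ _ _

theorem eval_subst_of_eq {a : α} {r : LinForm α} {v : α → ℤ} (h : v a = eval r v)
    (f : LinForm α) : eval (subst a r f) v = eval f v := by
  rw [eval_subst, eval_eq_coeff_mul_add a f, h]

theorem fst_ne_of_mem_solve {a : α} {c : ℤ} {f : LinForm α} {p : α × ℤ} (hp : p ∈ solve a c f) :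
    p.1 ≠ a := by
  obtain ⟨q, hq, rfl⟩ := List.mem_map.1 hp
  exact of_decide_eq_true (List.mem_filter.1 hq).2

theorem exists_mem_of_mem_solve {a : α} {c : ℤ} {f : LinForm α} {p : α × ℤ}
    (hp : p ∈ solve a c f) : ∃ q ∈ f, q.1 = p.1 := by
  obtain ⟨q, hq, rfl⟩ := List.mem_map.1 hp
  exact ⟨q, List.mem_of_mem_filter hq, rfl⟩

theorem eval_solve_update (a : α) (c : ℤ) (f : LinForm α) (v : α → ℤ) (x : ℤ) :
    eval (solve a c f) (Function.update v a x) = eval (solve a c f) v :=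
  eval_congr fun _ hp => Function.update_of_ne (fst_ne_of_mem_solve hp) _ _

theorem mul_eval_solve (a : α) {c : ℤ} {f : LinForm α} (hc : ∀ p ∈ f, c ∣ p.2) (v : α → ℤ) :
    c * eval (solve a c f) v = -eval (erase a f) v := by
  have dvd (p) (hp : p ∈ erase a f) : c ∣ p.2 := hc p (List.mem_of_mem_filter hp)
  rw [solve]
  generalize erase a f = g at dvd
  induction g with
  | nil => simp
  | cons p g ih =>
    rw [List.forall_mem_cons] at dvd
    rw [List.map_cons, eval_cons, eval_cons, mul_add, ih dvd.2, ← mul_assoc, mul_neg,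
      Int.mul_ediv_cancel' dvd.1]
    ring

theorem eval_eq_mul_sub_solve {a : α} {f : LinForm α} (h : ∀ p ∈ f, coeff a f ∣ p.2)
    (v : α → ℤ) : eval f v = coeff a f * (v a - eval (solve a (coeff a f) f) v) := by
  rw [mul_sub, mul_eval_solve a h, sub_neg_eq_add, eval_eq_coeff_mul_add a f]

theorem eval_subst_solve_update (a : α) (c : ℤ) (f g : LinForm α) (v : α → ℤ) (x : ℤ) :
    eval (subst a (solve a c f) g) (Function.update v a x) = eval (subst a (solve a c f) g) v := by
  rw [eval_subst, eval_subst, eval_solve_update]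
  congr 1
  exact eval_congr fun p hp =>
    Function.update_of_ne (of_decide_eq_true (List.mem_filter.1 hp).2) _ _

theorem eval_eq_eval_subst_add {a : α} {f : LinForm α} (hf : ∀ q ∈ f, coeff a f ∣ q.2)
    {g : LinForm α} (hg : coeff a f ∣ coeff a g) (v : α → ℤ) :
    eval g v = eval (subst a (solve a (coeff a f) f) g) v
      + coeff a g / coeff a f * eval f v := by
  rw [eval_eq_mul_sub_solve hf, ← mul_assoc, Int.ediv_mul_cancel hg, eval_subst,
    eval_eq_coeff_mul_add a g]
  ring

theorem eval_eq_zero_iff {a : α} {f : LinForm α} (ha : coeff a f ≠ 0)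
    (h : ∀ p ∈ f, coeff a f ∣ p.2) (v : α → ℤ) :
    eval f v = 0 ↔ v a = eval (solve a (coeff a f) f) v := by
  rw [eval_eq_mul_sub_solve h, mul_eq_zero, or_iff_right ha, sub_eq_zero]

end LinForm

section Kernel

open LinForm

variable {α : Type}

/-- The elements of `K` are determined by their values on `S`, which are arbitrary. -/
structure IsParametrizedBy (K : Set (α → ℤ)) (S : List α) : Prop where
  eq_of_eqOn : ∀ {v w : α → ℤ}, v ∈ K → w ∈ K → (∀ a ∈ S, v a = w a) → v = w
  exists_eqOn : ∀ v : α → ℤ, ∃ w ∈ K, ∀ a ∈ S, w a = v a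

theorem isParametrizedBy_univ {S : List α} (hS : ∀ a, a ∈ S) :
    IsParametrizedBy (Set.univ : Set (α → ℤ)) S where
  eq_of_eqOn _ _ h := funext fun a => h a (hS a)
  exists_eqOn v := ⟨v, Set.mem_univ v, fun _ _ => rfl⟩

variable [DecidableEq α]

theorem IsParametrizedBy.pivot {K : Set (α → ℤ)} {S : List α} (hK : IsParametrizedBy K S) {a : α}
    {f g : LinForm α} (f_eq : ∀ v ∈ K, eval f v = eval g v) (ha : coeff a f ≠ 0)
    (dvd : ∀ p ∈ f, coeff a f ∣ p.2) (mem : ∀ p ∈ f, p.1 ∈ S) :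
    IsParametrizedBy {v ∈ K | eval g v = 0} (S.filter (· ≠ a)) where
  eq_of_eqOn {v w} hv hw h := by
    obtain ⟨hv, gv⟩ := hv
    obtain ⟨hw, gw⟩ := hw
    rw [← f_eq _ hv, eval_eq_zero_iff ha dvd] at gv
    rw [← f_eq _ hw, eval_eq_zero_iff ha dvd] at gw
    refine hK.eq_of_eqOn hv hw fun b hb => ?_
    by_cases hba : b = a
    · rw [hba, gv, gw]
      refine eval_congr fun p hp => h p.1 ?_
      obtain ⟨q, hq, hqp⟩ := exists_mem_of_mem_solve hp
      exact List.mem_filter.2 ⟨hqp ▸ mem q hq, decide_eq_true (fst_ne_of_mem_solve hp)⟩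
    · exact h b (List.mem_filter.2 ⟨hb, decide_eq_true hba⟩)
  exists_eqOn v := by
    obtain ⟨w, hw, w_eq⟩ := hK.exists_eqOn (Function.update v a (eval (solve a (coeff a f) f) v))
    refine ⟨w, ⟨hw, ?_⟩, fun b hb => ?_⟩
    · rw [← f_eq w hw, eval_congr fun p hp => w_eq p.1 (mem p hp), eval_eq_zero_iff ha dvd,
        Function.update_self, eval_solve_update]
    · obtain ⟨hb, hba⟩ := List.mem_filter.1 hb
      rw [w_eq b hb, Function.update_of_ne (of_decide_eq_true hba)]

/-- Gaussian elimination on a system of linear forms. The variables `S` are still free and `E`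
expresses the others in terms of them; the result is the final list of free variables, or `none`
if an equation has no coefficient dividing all others. -/
def freeVars : List α → List (α × LinForm α) → List (LinForm α) → Option (List α)
  | S, _, [] => some S
  | S, E, g :: G =>
    let f := E.foldl (fun f e => subst e.1 e.2 f) g
    match f.find? fun p => coeff p.1 f ≠ 0 ∧ ∀ q ∈ f, coeff p.1 f ∣ q.2 ∧ q.1 ∈ S with
    | none => if f = [] then freeVars S E G else none
    | some (a, _) => freeVars (S.filter (· ≠ a)) (E ++ [(a, solve a (coeff a f) f)]) G

theorem eval_foldl_subst {v : α → ℤ} {E : List (α × LinForm α)}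
    (hE : ∀ e ∈ E, v e.1 = eval e.2 v) (g : LinForm α) :
    eval (E.foldl (fun f e => subst e.1 e.2 f) g) v = eval g v := by
  induction E generalizing g with
  | nil => rfl
  | cons e E ih =>
    rw [List.forall_mem_cons] at hE
    rw [List.foldl_cons, ih hE.2, eval_subst_of_eq hE.1]

theorem IsParametrizedBy.of_freeVars {K : Set (α → ℤ)} {S T : List α}
    {E : List (α × LinForm α)} {G : List (LinForm α)} (hK : IsParametrizedBy K S)
    (hE : ∀ v ∈ K, ∀ e ∈ E, v e.1 = eval e.2 v) (hT : freeVars S E G = some T) :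
    IsParametrizedBy {v ∈ K | ∀ g ∈ G, eval g v = 0} T := by
  induction G generalizing K S E with
  | nil =>
    rw [freeVars, Option.some_inj] at hT
    simpa [← hT] using hK
  | cons g G ih =>
    have f_eq (v) (hv : v ∈ K) := eval_foldl_subst (hE v hv) g
    rw [freeVars] at hT
    generalize E.foldl (fun f e => subst e.1 e.2 f) g = f at f_eq hT
    split at hT
    case h_1 _ =>
      have hf : f = [] := by by_contra hf; simp [hf] at hT
      have hg (v) (hv : v ∈ K) : eval g v = 0 := by rw [← f_eq v hv, hf, eval_nil]
      convert ih hK hE (by simpa [hf] using hT) using 1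
      ext v
      simpa using fun hv _ => ⟨hv, hg v hv⟩
    case h_2 _ a c found =>
      have pivot := List.find?_some found
      obtain ⟨ha, hf⟩ := of_decide_eq_true pivot
      have dvd (p) (hp : p ∈ f) := (hf p hp).1
      convert ih (hK.pivot f_eq ha dvd fun p hp => (hf p hp).2) ?_ hT using 1
      · ext v
        simp [and_assoc]
      · rintro v ⟨hv, gv⟩ e he
        rw [List.mem_append, List.mem_singleton] at he
        obtain he | rfl := he
        · exact hE v hv e he
        · rwa [← f_eq v hv, eval_eq_zero_iff ha dvd] at gv

end Kernel

/-- The direct sum of the cyclic groups `ℤ/d`, where `ℤ/0 = ℤ`. -/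
def CyclicSum : List ℕ → Type
  | [] => PUnit
  | d :: ds => ZMod d × CyclicSum ds

namespace CyclicSum

instance addCommGroup : (ds : List ℕ) → AddCommGroup (CyclicSum ds)
  | [] => inferInstanceAs (AddCommGroup PUnit)
  | d :: ds =>
    haveI := addCommGroup ds
    inferInstanceAs (AddCommGroup (ZMod d × CyclicSum ds))

/-- The first summand of a direct sum of cyclic groups split off. -/
def consEquiv (d : ℕ) (ds : List ℕ) : CyclicSum (d :: ds) ≃+ ZMod d × CyclicSum ds :=
  AddEquiv.refl _

instance : Unique (CyclicSum []) := inferInstanceAs (Unique PUnit)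

theorem nonempty_addEquiv_of_perm {ds es : List ℕ} (h : ds.Perm es) :
    Nonempty (CyclicSum ds ≃+ CyclicSum es) := by
  induction h with
  | nil => exact ⟨AddEquiv.refl _⟩
  | cons d _ ih =>
    obtain ⟨e⟩ := ih
    exact ⟨(consEquiv _ _).trans (((AddEquiv.refl _).prodCongr e).trans (consEquiv _ _).symm)⟩
  | swap a b ds =>
    let split (a b : ℕ) : CyclicSum (a :: b :: ds) ≃+ ZMod a × ZMod b × CyclicSum ds :=
      (consEquiv _ _).trans ((AddEquiv.refl _).prodCongr (consEquiv _ _))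
    exact ⟨(split b a).trans ((AddEquiv.prodAssoc.symm.trans
      ((AddEquiv.prodComm.prodCongr (AddEquiv.refl _)).trans AddEquiv.prodAssoc)).trans
      (split a b).symm)⟩
  | trans _ _ ih₁ ih₂ =>
    obtain ⟨⟨e₁⟩, ⟨e₂⟩⟩ := And.intro ih₁ ih₂
    exact ⟨e₁.trans e₂⟩

theorem nonempty_addEquiv_filter_ne_one (ds : List ℕ) :
    Nonempty (CyclicSum ds ≃+ CyclicSum (ds.filter (· ≠ 1))) := by
  induction ds with
  | nil => exact ⟨AddEquiv.refl _⟩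
  | cons d ds ih =>
    obtain ⟨e⟩ := ih
    by_cases hd : d = 1
    · subst hd
      exact ⟨(consEquiv 1 ds).trans (AddEquiv.uniqueProd.trans e)⟩
    · rw [List.filter_cons, if_pos (decide_eq_true hd)]
      exact ⟨(consEquiv _ _).trans (((AddEquiv.refl _).prodCongr e).trans (consEquiv _ _).symm)⟩

/-- The direct sum of copies of one cyclic group as a power. -/
def powerEquiv (m d : ℕ) : CyclicSum (List.replicate m d) ≃+ (Fin m → ZMod d) :=
  match m with
  | 0 => (AddEquiv.ofUnique : CyclicSum [] ≃+ _)
  | m + 1 => ((consEquiv _ _).trans ((AddEquiv.refl _).prodCongr (powerEquiv m d))).trans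
      { (Fin.consEquiv fun _ => ZMod d) with
        map_add' := fun _ _ => funext fun i => by cases i using Fin.cases <;> rfl }

/-- A concatenation as a direct sum. -/
def appendEquiv : (ds es : List ℕ) → CyclicSum (ds ++ es) ≃+ CyclicSum ds × CyclicSum es
  | [], _ => AddEquiv.uniqueProd.symm
  | _ :: ds, es => ((AddEquiv.refl _).prodCongr (appendEquiv ds es)).trans AddEquiv.prodAssoc.symm

end CyclicSum

section Cokernel

open LinForm

variable {α β : Type}

/-- `Q` is the cokernel of the homomorphism whose component at `b` is the form `f`, for
`(b, f)` in `F`. -/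
def HasCokernel (F : List (β × LinForm α)) (Q : Type) [AddCommGroup Q] : Prop :=
  ∃ π : (β → ℤ) →+ Q, Function.Surjective π ∧
    ∀ v, π v = 0 ↔ ∃ u, ∀ p ∈ F, v p.1 = eval p.2 u

theorem hasCokernel_nil {Q : Type} [AddCommGroup Q] [Subsingleton Q] :
    HasCokernel ([] : List (β × LinForm α)) Q :=
  ⟨0, Function.surjective_to_subsingleton _, fun _ => by simp⟩

theorem HasCokernel.prod {F F' : List (β × LinForm α)} {Q : Type} [AddCommGroup Q]
    (hF' : HasCokernel F' Q) {b : β} (hb : ∀ p ∈ F', p.1 ≠ b) (d : ℕ) (k : β → ℤ)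
    (iff : ∀ v : β → ℤ, (∃ u, ∀ p ∈ F, v p.1 = eval p.2 u) ↔
      (d : ℤ) ∣ v b ∧ ∃ u, ∀ p ∈ F', v p.1 - k p.1 * v b = eval p.2 u) :
    HasCokernel F (ZMod d × Q) := by
  classical
  obtain ⟨π, π_surj, π_eq_zero⟩ := hF'
  have π_congr {v w : β → ℤ} (h : ∀ p ∈ F', v p.1 = w p.1) : π v = π w := by
    rw [← sub_eq_zero, ← map_sub, π_eq_zero]
    exact ⟨0, fun p hp => by simp [h p hp]⟩
  let reduce : (β → ℤ) →+ (β → ℤ) :=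
    { toFun v c := v c - k c * v b
      map_zero' := by ext; simp
      map_add' v w := by ext; simp only [Pi.add_apply]; ring }
  refine ⟨((Int.castAddHom (ZMod d)).comp (Pi.evalAddMonoidHom _ b)).prod (π.comp reduce), ?_, ?_⟩
  · rintro ⟨x, q⟩
    obtain ⟨z, rfl⟩ := ZMod.intCast_surjective x
    obtain ⟨v, rfl⟩ := π_surj q
    refine ⟨Function.update (fun c => v c + k c * z) b z, Prod.ext ?_ (π_congr fun p hp => ?_)⟩
    · simp
    · simp [reduce, hb p hp]
  · intro v
    rw [iff, ← ZMod.intCast_zmod_eq_zero_iff_dvd]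
    exact Prod.ext_iff.trans (and_congr_right' (π_eq_zero (reduce v)))

variable [DecidableEq β]

theorem HasCokernel.prod_of_mem_nil {F : List (β × LinForm α)} {row : β → LinForm α}
    (hrow : ∀ p ∈ F, p.2 = row p.1) {p : β × LinForm α} (hp : p ∈ F) (p_nil : p.2 = [])
    {Q : Type} [AddCommGroup Q] (hQ : HasCokernel (F.filter (·.1 ≠ p.1)) Q) :
    HasCokernel F (ZMod 0 × Q) := by
  refine hQ.prod (fun q hq => of_decide_eq_true (List.mem_filter.1 hq).2) 0 0 fun v => ?_
  simp only [Nat.cast_zero, zero_dvd_iff, Pi.zero_apply, zero_mul, sub_zero, List.mem_filter,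
    decide_eq_true_eq]
  constructor
  · rintro ⟨u, hu⟩
    exact ⟨by rw [hu p hp, p_nil, eval_nil], u, fun q hq => hu q hq.1⟩
  · rintro ⟨v_eq_zero, u, hu⟩
    refine ⟨u, fun q hq => ?_⟩
    by_cases hqp : q.1 = p.1
    · rw [hrow q hq, hqp, ← hrow p hp, p_nil, v_eq_zero, eval_nil]
    · exact hu q ⟨hq, hqp⟩

variable [DecidableEq α]

/-- The variable `a` occurs in the form of `p` with coefficient `± d`, which divides the other
coefficients of the form as well as the coefficients of `a` in the other forms. -/
def IsPivot (F : List (β × LinForm α)) (d : ℕ) (p : β × LinForm α) (a : α) : Prop :=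
  (coeff a p.2).natAbs = d ∧ (∀ q ∈ p.2, coeff a p.2 ∣ q.2) ∧ ∀ q ∈ F, coeff a p.2 ∣ coeff a q.2

instance (F : List (β × LinForm α)) (d : ℕ) (p : β × LinForm α) (a : α) :
    Decidable (IsPivot F d p a) :=
  inferInstanceAs (Decidable (_ ∧ _))

/-- The forms other than that of `p`, after substituting for `a` the solution of `p.2 = 0`. -/
def eliminate (F : List (β × LinForm α)) (p : β × LinForm α) (a : α) : List (β × LinForm α) :=
  (F.filter (·.1 ≠ p.1)).map fun q => (q.1, subst a (solve a (coeff a p.2) p.2) q.2)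

theorem HasCokernel.prod_of_isPivot {F : List (β × LinForm α)} {row : β → LinForm α}
    (hrow : ∀ p ∈ F, p.2 = row p.1) {d : ℕ} {p : β × LinForm α} {a : α} (hp : p ∈ F)
    (pivot : IsPivot F d p a) {Q : Type} [AddCommGroup Q]
    (hQ : HasCokernel (eliminate F p a) Q) : HasCokernel F (ZMod d × Q) := by
  obtain ⟨natAbs_coeff, dvd_row, dvd_column⟩ := pivot
  let k (b : β) : ℤ := coeff a (row b) / coeff a p.2
  have eval_eq {q} (hq : q ∈ F) (u : α → ℤ) : eval q.2 u
      = eval (subst a (solve a (coeff a p.2) p.2) q.2) u + k q.1 * eval p.2 u := by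
    rw [eval_eq_eval_subst_add dvd_row (dvd_column q hq) u, hrow q hq]
  refine hQ.prod (b := p.1) ?_ d k fun v => ?_
  · rw [eliminate, List.forall_mem_map]
    exact fun q hq => of_decide_eq_true (List.mem_filter.1 hq).2
  simp only [← natAbs_coeff, Int.natAbs_dvd, eliminate, List.forall_mem_map, List.mem_filter,
    decide_eq_true_eq]
  constructor
  · rintro ⟨u, hu⟩
    refine ⟨?_, u, fun q hq => ?_⟩
    · rw [hu p hp, eval_eq_mul_sub_solve dvd_row]
      exact dvd_mul_right _ _
    · rw [hu q hq.1, hu p hp, eval_eq hq.1 u, add_sub_cancel_right]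
  · rintro ⟨⟨t, ht⟩, u, hu⟩
    let u' := Function.update u a (eval (solve a (coeff a p.2) p.2) u + t)
    have eval_p : eval p.2 u' = v p.1 := by
      rw [eval_eq_mul_sub_solve dvd_row, eval_solve_update, ht]
      simp [u']
    refine ⟨u', fun q hq => ?_⟩
    by_cases hqp : q.1 = p.1
    · rw [hrow q hq, hqp, ← hrow p hp, eval_p]
    · rw [eval_eq hq, eval_p, eval_subst_solve_update, ← hu q ⟨hq, hqp⟩, sub_add_cancel]

/-- Elimination with prescribed pivots, where the pivot `0` stands for a vanishing form. -/
def hasPivots : List (β × LinForm α) → List ℕ → Bool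
  | F, [] => F = []
  | F, 0 :: ds =>
    match F.find? (·.2 = []) with
    | none => false
    | some p => hasPivots (F.filter (·.1 ≠ p.1)) ds
  | F, (d + 1) :: ds =>
    match (F.flatMap fun p => p.2.map fun q => (p, q.1)).find? fun x =>
      IsPivot F (d + 1) x.1 x.2 with
    | none => false
    | some x => hasPivots (eliminate F x.1 x.2) ds

theorem hasCokernel_of_hasPivots {F : List (β × LinForm α)} {row : β → LinForm α}
    (hrow : ∀ p ∈ F, p.2 = row p.1) {ds : List ℕ} (h : hasPivots F ds = true) :
    HasCokernel F (CyclicSum ds) := by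
  fun_induction hasPivots F ds generalizing row with
  | case1 F =>
    obtain rfl := of_decide_eq_true h
    exact hasCokernel_nil
  | case2 | case4 => contradiction
  | case3 F ds p found ih =>
    have hp := List.find?_some found
    exact .prod_of_mem_nil hrow (List.mem_of_find?_eq_some found) (of_decide_eq_true hp)
      (ih (fun q hq => hrow q (List.mem_of_mem_filter hq)) h)
  | case5 F d ds x found ih =>
    have pivot := List.find?_some found
    obtain ⟨p, hp, hx⟩ := List.mem_flatMap.1 (List.mem_of_find?_eq_some found)
    obtain ⟨q, -, rfl⟩ := List.mem_map.1 hx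
    refine .prod_of_isPivot hrow hp (of_decide_eq_true pivot)
      (ih (row := fun b => subst q.1 (solve q.1 (coeff q.1 p.2) p.2) (row b)) ?_ h)
    rw [eliminate, List.forall_mem_map]
    exact fun r hr => by rw [hrow r (List.mem_of_mem_filter hr)]

end Cokernel

section OrbitTranspose

variable {k : Type} [CommRing k] {G : Type} [Group G] {E : Type} [AddCommGroup E] [Module k E]
  {ι : Type} {ρ : Representation k G E} {B : Module.Basis (G × ι) k E}

theorem orbitTranspose_orbitTranspose (hB : IsFreeBasis ρ B) {A : Module.End k E}
    (hA : ∀ g x, A (ρ g x) = ρ g (A x)) (A' : Module.End k E) (v : ι → k) :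
    orbitTranspose B A' (orbitTranspose B A v) = orbitTranspose B (A * A') v :=
  funext fun _ => orbitFunctional_orbitTranspose hB hA v _

namespace TruncatedResolution

theorem orbitTranspose_d_d (R : TruncatedResolution ρ) (hB : IsFreeBasis ρ B) (n : ℕ)
    (v : ι → k) : orbitTranspose B (R.d (n + 1)) (orbitTranspose B (R.d n) v) = 0 := by
  rw [orbitTranspose_orbitTranspose hB (R.d_rho n),
    show R.d n * R.d (n + 1) = 0 from LinearMap.ext (R.d_d n)]
  ext
  rw [orbitTranspose_apply, LinearMap.zero_apply, map_zero, Pi.zero_apply]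

theorem orbitTranspose_d_trunc (R : TruncatedResolution ρ) (hB : IsFreeBasis ρ B) (n : ℕ)
    (v : ι → k) : orbitTranspose B (R.d n) (orbitTranspose B (R.trunc n) v) =
      orbitTranspose B (R.trunc (n + 1)) (orbitTranspose B (R.d n) v) := by
  rw [orbitTranspose_orbitTranspose hB (R.trunc_rho n),
    orbitTranspose_orbitTranspose hB (R.d_rho n),
    show R.trunc n * R.d n = R.d n * R.trunc (n + 1) from LinearMap.ext (R.trunc_d n)]

end TruncatedResolution

end OrbitTranspose

section OrbitForms

open LinForm

variable {G : Type} [Group G] {E : Type} [AddCommGroup E] {ι : Type} {ρ : Representation ℤ G E}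
  {B : Module.Basis (G × ι) ℤ E} {R : TruncatedResolution ρ}

/-- The coordinates in which the cochains of `R` are functions on orbits: `dim i` is the degree
from which on the orbit `i` contributes, and the coboundary has the components `form n i`. -/
structure IsOrbitForms (R : TruncatedResolution ρ) (B : Module.Basis (G × ι) ℤ E) (dim : ι → ℕ)
    (form : ℕ → ι → LinForm ι) : Prop where
  trunc_apply : ∀ n v i, orbitTranspose B (R.trunc n) v i = if dim i ≤ n then v i else 0
  d_apply : ∀ n v i, orbitTranspose B (R.d n) v i = eval (form n i) v

/-- The cocycles of degree `n`, extended by zero to all orbits. -/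
def orbitCocycles (dim : ι → ℕ) (form : ℕ → ι → LinForm ι) (n : ℕ) : Set (ι → ℤ) :=
  {v | (∀ i, n < dim i → v i = 0) ∧ ∀ i, dim i ≤ n + 1 → eval (form n i) v = 0}

variable {dim : ι → ℕ} {form : ℕ → ι → LinForm ι}

namespace IsOrbitForms

theorem mem_orbitCocycles_trunc (hR : IsOrbitForms R B dim form) (hB : IsFreeBasis ρ B) {n : ℕ}
    {v : ι → ℤ} (hv : orbitTranspose B (R.trunc (n + 1)) (orbitTranspose B (R.d n) v) = 0) :
    orbitTranspose B (R.trunc n) v ∈ orbitCocycles dim form n := by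
  refine ⟨fun i hi => ?_, fun i _ => ?_⟩
  · rw [hR.trunc_apply, if_neg hi.not_ge]
  · rw [← hR.d_apply, R.orbitTranspose_d_trunc hB, hv, Pi.zero_apply]

theorem trunc_d_of_mem_orbitCocycles (hR : IsOrbitForms R B dim form) {n : ℕ} {v : ι → ℤ}
    (hv : v ∈ orbitCocycles dim form n) :
    orbitTranspose B (R.trunc (n + 1)) (orbitTranspose B (R.d n) v) = 0 := by
  ext i
  rw [hR.trunc_apply, hR.d_apply, Pi.zero_apply]
  split_ifs with hi
  exacts [hv.2 i hi, rfl]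

theorem nonempty_addEquiv (hR : IsOrbitForms R B dim form) (hB : IsFreeBasis ρ B) {n : ℕ}
    {S : List ι} (hS : IsParametrizedBy (orbitCocycles dim form (n + 1)) S)
    (dim_le : ∀ i ∈ S, dim i ≤ n + 1) {Q : Type} [AddCommGroup Q]
    (hQ : HasCokernel (S.map fun i => (i, form n i)) Q) :
    Nonempty (groupCohomology (Rep.trivial ℤ G ℤ) (n + 1) ≃+ Q) := by
  obtain ⟨π, π_surjective, π_eq_zero⟩ := hQ
  simp only [List.forall_mem_map, ← hR.d_apply] at π_eq_zero
  have π_congr {v w : ι → ℤ} (h : ∀ i ∈ S, v i = w i) : π v = π w := by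
    rw [← sub_eq_zero, ← map_sub, π_eq_zero]
    exact ⟨0, fun i hi => by simp [h i hi]⟩
  have trunc_apply (v) (i) (hi : i ∈ S) : orbitTranspose B (R.trunc (n + 1)) v i = v i := by
    rw [hR.trunc_apply, if_pos (dim_le i hi)]
  refine R.nonempty_addEquiv_of_orbits hB n π.toIntLinearMap (fun v => π_congr (trunc_apply v))
    (fun v => (π_eq_zero _).2 ⟨v, fun _ _ => rfl⟩) (fun q => ?_) fun v hv π_v => ?_
  · obtain ⟨v, rfl⟩ := π_surjective q
    obtain ⟨w, hw, w_eq⟩ := hS.exists_eqOn v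
    exact ⟨w, hR.trunc_d_of_mem_orbitCocycles hw, π_congr w_eq⟩
  · obtain ⟨u, hu⟩ := (π_eq_zero v).1 π_v
    have cocycle_u : orbitTranspose B (R.trunc (n + 2))
        (orbitTranspose B (R.d (n + 1)) (orbitTranspose B (R.d n) u)) = 0 := by
      rw [R.orbitTranspose_d_d hB, map_zero]
    refine ⟨u, hS.eq_of_eqOn (hR.mem_orbitCocycles_trunc hB cocycle_u)
      (hR.mem_orbitCocycles_trunc hB hv) fun i hi => ?_⟩
    rw [trunc_apply _ i hi, trunc_apply _ i hi, hu i hi]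

end IsOrbitForms

/-- The equations of `orbitCocycles`, for orbits listed by `L`. -/
def cocycleForms (L : List ι) (dim : ι → ℕ) (form : ℕ → ι → LinForm ι) (n : ℕ) :
    List (LinForm ι) :=
  ((L.filter (n < dim ·)).map fun i => [(i, 1)]) ++ (L.filter (dim · ≤ n + 1)).map (form n)

theorem forall_mem_cocycleForms {L : List ι} (hL : ∀ i, i ∈ L) (n : ℕ) (v : ι → ℤ) :
    (∀ g ∈ cocycleForms L dim form n, eval g v = 0) ↔ v ∈ orbitCocycles dim form n := by
  rw [cocycleForms, List.forall_mem_append, List.forall_mem_map, List.forall_mem_map]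
  simp [orbitCocycles, hL]

variable [DecidableEq ι]

/-- The cohomology in degree `n + 1` computed by elimination is `CyclicSum ds`. -/
def hasInvariants (L : List ι) (dim : ι → ℕ) (form : ℕ → ι → LinForm ι) (n : ℕ) (ds : List ℕ) :
    Bool :=
  match freeVars L [] (cocycleForms L dim form (n + 1)) with
  | none => false
  | some S => S.all (dim · ≤ n + 1) && hasPivots (S.map fun i => (i, form n i)) ds

theorem hasInvariants_add_mul {dim : ι → ℕ} {N p : ℕ} (dim_le : ∀ i, dim i ≤ N)
    (form_add : ∀ n, N ≤ n → form (n + p) = form n) (L : List ι) {n : ℕ} (hn : N ≤ n) (ds : List ℕ)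
    (m : ℕ) : hasInvariants L dim form (n + p * m) ds = hasInvariants L dim form n ds := by
  have dim_le_of_le {i : ι} {m : ℕ} (hm : N ≤ m) : dim i ≤ m := (dim_le i).trans hm
  have step {n : ℕ} (hn : N ≤ n) :
      hasInvariants L dim form (n + p) ds = hasInvariants L dim form n ds := by
    simp only [hasInvariants, cocycleForms, add_right_comm n p, add_right_comm (n + 1) p,
      form_add n hn, form_add (n + 1) (by lia), dim_le_of_le (show N ≤ n + 1 by lia),
      dim_le_of_le (show N ≤ n + 1 + 1 by lia), dim_le_of_le (show N ≤ n + 1 + p by lia),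
      dim_le_of_le (show N ≤ n + 1 + 1 + p by lia), ← not_le]
  induction m with
  | zero => rfl
  | succ m ih => rw [mul_add_one, ← add_assoc, step (by lia), ih]

theorem IsOrbitForms.nonempty_addEquiv_cyclicSum (hR : IsOrbitForms R B dim form)
    (hB : IsFreeBasis ρ B) {L : List ι} (hL : ∀ i, i ∈ L) {n : ℕ} {ds : List ℕ}
    (h : hasInvariants L dim form n ds = true) :
    Nonempty (groupCohomology (Rep.trivial ℤ G ℤ) (n + 1) ≃+ CyclicSum ds) := by
  rw [hasInvariants] at h
  split at h
  case h_1 => contradiction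
  case h_2 S hS =>
    rw [Bool.and_eq_true, List.all_eq_true] at h
    have param := (isParametrizedBy_univ hL).of_freeVars (by simp) hS
    simp only [Set.mem_univ, true_and, forall_mem_cocycleForms hL, Set.ofPred_mem_eq] at param
    refine hR.nonempty_addEquiv hB param (fun i hi => of_decide_eq_true (h.1 i hi))
      (hasCokernel_of_hasPivots (row := form n) ?_ h.2)
    simp

end OrbitForms

section RotationForms

open AddMonoidAlgebra LinForm

/-- The effect of the generator of `ℤ/8` on a signed orbit of cells. -/
def turn (p : Fin 64 × ℤ) : Fin 64 × ℤ :=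
  (orbitIndex (rotation (orbitRep p.1)), p.2 * rotationSign (orbitRep p.1))

/-- The cubical coboundary at the orbit `j`. -/
def faceForm (j : Fin 64) : LinForm (Fin 64) :=
  (List.finRange 5).flatMap fun i =>
    if Odd (orbitRep j i) then
      [(orbitIndex (Function.update (orbitRep j) i (orbitRep j i + 1)), koszulSign i (orbitRep j)),
        (orbitIndex (Function.update (orbitRep j) i (orbitRep j i - 1)),
          -koszulSign i (orbitRep j))]
    else []

/-- The effect of `periodicCoeff` on a signed orbit of cells; here `turn^[7]` is the inverse of
`turn`. -/
def periodicForm : ℕ → Fin 64 × ℤ → LinForm (Fin 64)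
  | 0, _ => []
  | m + 1, p => if Even m then [turn^[7] p, (p.1, -p.2)] else (List.range 8).map (turn^[·] p)

/-- The coboundary into degree `n` at the orbit `j`, with like terms collected. -/
def coboundaryForm (n : ℕ) (j : Fin 64) : LinForm (Fin 64) :=
  addMul 1 (faceForm j ++ periodicForm (n - cubeDim (orbitRep j)) (j, (-1) ^ cubeDim (orbitRep j)))
    []

variable {B : Module.Basis (Crys 8 holM holM_pow × Fin 64) ℤ ((Fin 5 → ℤ) →₀ ℤ[ZMod 8])}

theorem orbitFunctional_chainAction (hB : IsFreeBasis (restrictRep ℤ chainAction) B)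
    (v : Fin 64 → ℤ) (g : Crys 8 holM holM_pow) (x : (Fin 5 → ℤ) →₀ ℤ[ZMod 8]) :
    orbitFunctional B v (chainAction g x) = orbitFunctional B v x :=
  orbitFunctional_rho hB v g x

theorem orbitFunctional_orbitIndex (hB : IsFreeBasis (restrictRep ℤ chainAction) B)
    (v : Fin 64 → ℤ) (x : Fin 5 → ℤ) (r : ℤ[ZMod 8]) :
    orbitFunctional B v (Finsupp.single (orbitRep (orbitIndex x)) r) =
      orbitFunctional B v (Finsupp.single x r) := by
  obtain ⟨l, hl⟩ := exists_eq_orbitRep_add x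
  have translate : chainAction (SemidirectProduct.inl (.ofAdd l))
      (Finsupp.single (orbitRep (orbitIndex x)) r) = Finsupp.single x r := by
    rw [chainAction_apply, SemidirectProduct.left_inl, SemidirectProduct.right_inl, toAdd_one,
      ZMod.val_zero, pow_zero, mul_one, translationHom_single, toAdd_ofAdd, ← hl]
  rw [← translate, orbitFunctional_chainAction hB]

theorem orbitFunctional_rotation (hB : IsFreeBasis (restrictRep ℤ chainAction) B)
    (v : Fin 64 → ℤ) (x : Fin 5 → ℤ) (c : ZMod 8) (a : ℤ) :
    orbitFunctional B v
        (Finsupp.single (rotation x) (AddMonoidAlgebra.single (c + 1) (a * rotationSign x))) =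
      orbitFunctional B v (Finsupp.single x (AddMonoidAlgebra.single c a)) := by
  have chainAction_inr : chainAction (SemidirectProduct.inr (.ofAdd 1)) = rotationOp := by
    rw [chainAction_apply, SemidirectProduct.left_inr, SemidirectProduct.right_inr, map_one,
      one_mul, toAdd_ofAdd, ZMod.val_one'' (by decide), pow_one]
  rw [← orbitFunctional_chainAction hB v (SemidirectProduct.inr (.ofAdd 1))
    (Finsupp.single x _), chainAction_inr, rotationOp, monomial_single, single_mul_single]

theorem orbitFunctional_turn (hB : IsFreeBasis (restrictRep ℤ chainAction) B)
    (hB1 : ∀ j, B (1, j) = Finsupp.single (orbitRep j) 1) (v : Fin 64 → ℤ) (n : ℕ)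
    (p : Fin 64 × ℤ) :
    orbitFunctional B v
        (Finsupp.single (orbitRep p.1) (AddMonoidAlgebra.single (-(n : ZMod 8)) p.2)) =
      (turn^[n] p).2 * v (turn^[n] p).1 := by
  induction n generalizing p with
  | zero =>
    have single_eq : Finsupp.single (orbitRep p.1) (AddMonoidAlgebra.single (0 : ZMod 8) p.2) =
        p.2 • B (1, p.1) := by
      rw [hB1, Finsupp.smul_single, one_def, AddMonoidAlgebra.smul_single, smul_eq_mul, mul_one]
    rw [Nat.cast_zero, neg_zero, single_eq, map_smul, orbitFunctional_basis, smul_eq_mul,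
      Function.iterate_zero_apply]
  | succ n ih =>
    rw [Function.iterate_succ_apply, ← ih, turn, orbitFunctional_orbitIndex hB,
      ← orbitFunctional_rotation hB, Nat.cast_succ, neg_add, neg_add_cancel_right]

theorem eval_faceForm (hB : IsFreeBasis (restrictRep ℤ chainAction) B)
    (hB1 : ∀ j, B (1, j) = Finsupp.single (orbitRep j) 1) (v : Fin 64 → ℤ) (j : Fin 64) :
    eval (faceForm j) v =
      orbitFunctional B v (cubeBoundary _ _ (Finsupp.single (orbitRep j) 1)) := by
  have cell (x : Fin 5 → ℤ) (a : ℤ) :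
      orbitFunctional B v (Finsupp.single x (a : ℤ[ZMod 8])) = a * v (orbitIndex x) := by
    rw [← orbitFunctional_orbitIndex hB, ← zsmul_one, ← Finsupp.smul_single, ← hB1, map_zsmul,
      orbitFunctional_basis, smul_eq_mul]
  rw [faceForm, eval_flatMap, cubeBoundary_single, map_sum, Fin.sum_univ_def]
  refine congrArg List.sum (List.map_congr_left fun i _ => ?_)
  split_ifs
  · rw [map_sub, cell, cell, eval_cons, eval_cons, eval_nil]
    ring
  · rw [eval_nil, map_zero]

theorem eval_periodicForm (hB : IsFreeBasis (restrictRep ℤ chainAction) B)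
    (hB1 : ∀ j, B (1, j) = Finsupp.single (orbitRep j) 1) (v : Fin 64 → ℤ) (m : ℕ)
    (p : Fin 64 × ℤ) :
    eval (periodicForm m p) v = orbitFunctional B v
      (Finsupp.single (orbitRep p.1) (p.2 * periodicCoeff ℤ 8 m)) := by
  have term (n : ℕ) :
      orbitFunctional B v (Finsupp.single (orbitRep p.1)
        ((p.2 : ℤ[ZMod 8]) * AddMonoidAlgebra.single (-(n : ZMod 8)) 1)) =
      (turn^[n] p).2 * v (turn^[n] p).1 := by
    rw [← orbitFunctional_turn hB hB1, ← zsmul_eq_mul, AddMonoidAlgebra.smul_single, smul_eq_mul,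
      mul_one]
  rcases m with _ | m
  · simp [periodicForm, periodicCoeff]
  · rw [periodicForm, periodicCoeff]
    split_ifs
    · have seven : AddMonoidAlgebra.single (1 : ZMod 8) (1 : ℤ) =
          AddMonoidAlgebra.single (-((7 : ℕ) : ZMod 8)) 1 := by
        congr 1
      have one_eq : (1 : ℤ[ZMod 8]) = AddMonoidAlgebra.single (-((0 : ℕ) : ZMod 8)) 1 := by
        rw [Nat.cast_zero, neg_zero, one_def]
      rw [cyclicDiff, mul_sub, Finsupp.single_sub, map_sub, seven, one_eq, term, term, eval_cons,
        eval_cons, eval_nil, Function.iterate_zero_apply]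
      ring
    · have norm_eq : cyclicNorm ℤ 8 =
          ∑ n ∈ Finset.range 8, AddMonoidAlgebra.single (-(n : ZMod 8)) 1 := by
        rw [cyclicNorm, ← Equiv.sum_comp (Equiv.neg (ZMod 8)), Finset.sum_range]
        rfl
      rw [norm_eq, Finset.mul_sum, Finsupp.single_finsetSum, map_sum, eval, List.map_map,
        Finset.sum_congr rfl fun n _ => term n]
      rfl

theorem isOrbitForms_coboundaryForm (hB : IsFreeBasis (restrictRep ℤ chainAction) B)
    (hB1 : ∀ j, B (1, j) = Finsupp.single (orbitRep j) 1) :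
    IsOrbitForms (cubeResolution chainAction chainAction_mem_cellularOperators) B
      (fun j => cubeDim (orbitRep j)) fun n => coboundaryForm (n + 1) where
  trunc_apply n v j := by
    rw [orbitTranspose_apply, hB1]
    change orbitFunctional B v (dimTrunc _ _ n (Finsupp.single _ 1)) = _
    rw [dimTrunc, dimDiag, diag_single, one_mul]
    split_ifs
    · rw [← hB1, orbitFunctional_basis]
    · rw [Finsupp.single_zero, map_zero]
  d_apply n v j := by
    rw [orbitTranspose_apply, hB1]
    change orbitFunctional B v
      (totalBoundary _ (periodicCoeff ℤ 8) (n + 1) (Finsupp.single _ 1)) = _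
    rw [totalBoundary, LinearMap.add_apply, map_add, dimDiag, diag_single, ← eval_faceForm hB hB1,
      coboundaryForm, eval_addMul, eval_append, eval_periodicForm hB hB1, fiberCoeff]
    simp

end RotationForms

section Periodicity

theorem periodicForm_add_two {m : ℕ} (hm : 0 < m) (p : Fin 64 × ℤ) :
    periodicForm (m + 2) p = periodicForm m p := by
  obtain ⟨m, rfl⟩ := Nat.exists_eq_succ_of_ne_zero hm.ne'
  simp [periodicForm, Nat.even_add_one]

theorem cubeDim_orbitRep_le (j : Fin 64) : cubeDim (orbitRep j) ≤ 5 :=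
  (Finset.card_filter_le _ _).trans_eq (Finset.card_fin 5)

theorem coboundaryForm_add_two {n : ℕ} (hn : 5 < n) :
    coboundaryForm (n + 2) = coboundaryForm n := by
  ext1 j
  have dim_le := cubeDim_orbitRep_le j
  rw [coboundaryForm, coboundaryForm, Nat.sub_add_comm (by lia), periodicForm_add_two (by lia)]

/-- The test that elimination among the 64 orbits of cells, taken in the order `L`, computes the
cohomology in degree `n + 1` to be `CyclicSum ds`. -/
abbrev hasOrbitInvariants (L : List (Fin 64)) (n : ℕ) (ds : List ℕ) : Bool :=
  hasInvariants L (fun j => cubeDim (orbitRep j)) (fun n => coboundaryForm (n + 1)) n ds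

theorem hasOrbitInvariants_add_two_mul (L : List (Fin 64)) {n : ℕ} (hn : 5 ≤ n) (ds : List ℕ)
    (m : ℕ) : hasOrbitInvariants L (n + 2 * m) ds = hasOrbitInvariants L n ds :=
  hasInvariants_add_mul cubeDim_orbitRep_le
    (fun n hn => by rw [add_right_comm, coboundaryForm_add_two (by lia)]) L hn ds m

theorem nonempty_addEquiv_of_hasOrbitInvariants {L : List (Fin 64)} (hL : ∀ j, j ∈ L) {n : ℕ}
    {ds es : List ℕ} (h : hasOrbitInvariants L n ds = true) (hes : (ds.filter (· ≠ 1)).Perm es) :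
    Nonempty (H (n + 1) ≃+ CyclicSum es) := by
  obtain ⟨B, hB, hB1⟩ := exists_isFreeBasis_chainAction
  obtain ⟨toCyclicSum⟩ :=
    (isOrbitForms_coboundaryForm hB hB1).nonempty_addEquiv_cyclicSum hB hL h
  obtain ⟨dropOnes⟩ := CyclicSum.nonempty_addEquiv_filter_ne_one ds
  obtain ⟨reorder⟩ := CyclicSum.nonempty_addEquiv_of_perm hes
  exact ⟨toCyclicSum.trans (dropOnes.trans reorder)⟩

end Periodicity

section Computation

set_option maxRecDepth 100000

theorem hasOrbitInvariants_zero : hasOrbitInvariants (List.finRange 64) 0 [1] = true := by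
  decide +kernel

-- With the orbits in their natural order, elimination runs out of pivots in this degree.
theorem hasOrbitInvariants_one : hasOrbitInvariants (List.finRange 64).reverse 1
    (List.replicate 9 1 ++ [0, 0, 8, 4]) = true := by
  decide +kernel

theorem hasOrbitInvariants_two :
    hasOrbitInvariants (List.finRange 64) 2 (List.replicate 19 1 ++ [0, 0]) = true := by
  decide +kernel

theorem hasOrbitInvariants_three :
    hasOrbitInvariants (List.finRange 64) 3 (List.replicate 27 1 ++ [2, 2, 4, 8, 0]) = true := by
  decide +kernel

theorem hasOrbitInvariants_four :
    hasOrbitInvariants (List.finRange 64) 4 (List.replicate 28 1 ++ [2, 2]) = true := by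
  decide +kernel

theorem hasOrbitInvariants_five :
    hasOrbitInvariants (List.finRange 64) 5 (List.replicate 28 1 ++ [2, 2, 2, 2, 8, 8]) = true := by
  decide +kernel

theorem hasOrbitInvariants_six :
    hasOrbitInvariants (List.finRange 64) 6 (List.replicate 28 1 ++ [2, 2]) = true := by
  decide +kernel

end Computation

section Degrees

open CyclicSum List

theorem subsingleton_H_one : Subsingleton (H 1) := by
  obtain ⟨e⟩ := nonempty_addEquiv_of_hasOrbitInvariants mem_finRange hasOrbitInvariants_zero .rfl
  exact e.injective.subsingleton (β := CyclicSum [])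

theorem nonempty_H_two_addEquiv : Nonempty (H 2 ≃+ ((Fin 2 → ℤ) × ZMod 8 × ZMod 4)) := by
  obtain ⟨e⟩ := nonempty_addEquiv_of_hasOrbitInvariants (es := replicate 2 0 ++ [8, 4])
    (fun j => mem_reverse.2 (mem_finRange j)) hasOrbitInvariants_one (by decide)
  exact ⟨e.trans ((appendEquiv _ _).trans
    ((powerEquiv 2 0).prodCongr ((AddEquiv.refl _).prodCongr AddEquiv.prodUnique)))⟩

theorem nonempty_H_three_addEquiv : Nonempty (H 3 ≃+ (Fin 2 → ℤ)) := by
  obtain ⟨e⟩ := nonempty_addEquiv_of_hasOrbitInvariants mem_finRange hasOrbitInvariants_two .rfl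
  exact ⟨e.trans (powerEquiv 2 0)⟩

theorem nonempty_H_four_addEquiv :
    Nonempty (H 4 ≃+ (ℤ × ZMod 8 × ZMod 4 × (Fin 2 → ZMod 2))) := by
  obtain ⟨e⟩ := nonempty_addEquiv_of_hasOrbitInvariants (es := 0 :: 8 :: 4 :: replicate 2 2)
    mem_finRange hasOrbitInvariants_three (by decide)
  exact ⟨e.trans ((AddEquiv.refl _).prodCongr ((AddEquiv.refl _).prodCongr
    ((AddEquiv.refl _).prodCongr (powerEquiv 2 2))))⟩

theorem nonempty_H_five_addEquiv : Nonempty (H 5 ≃+ (Fin 2 → ZMod 2)) := by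
  obtain ⟨e⟩ := nonempty_addEquiv_of_hasOrbitInvariants mem_finRange hasOrbitInvariants_four .rfl
  exact ⟨e.trans (powerEquiv 2 2)⟩

theorem nonempty_H_addEquiv_of_even {i : ℕ} (hi : 6 ≤ i) (even : Even i) :
    Nonempty (H i ≃+ ((Fin 2 → ZMod 8) × (Fin 4 → ZMod 2))) := by
  obtain ⟨m, rfl⟩ : ∃ m, i = 5 + 2 * m + 1 := ⟨(i - 6) / 2, by grind⟩
  obtain ⟨e⟩ := nonempty_addEquiv_of_hasOrbitInvariants (es := replicate 2 8 ++ replicate 4 2)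
    mem_finRange ((hasOrbitInvariants_add_two_mul _ le_rfl _ m).trans hasOrbitInvariants_five)
    (by decide)
  exact ⟨e.trans ((appendEquiv _ _).trans ((powerEquiv 2 8).prodCongr (powerEquiv 4 2)))⟩

theorem nonempty_H_addEquiv_of_odd {i : ℕ} (hi : 7 ≤ i) (odd : Odd i) :
    Nonempty (H i ≃+ (Fin 2 → ZMod 2)) := by
  obtain ⟨m, rfl⟩ : ∃ m, i = 6 + 2 * m + 1 := ⟨(i - 7) / 2, by grind⟩
  obtain ⟨e⟩ := nonempty_addEquiv_of_hasOrbitInvariants mem_finRange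
    ((hasOrbitInvariants_add_two_mul _ (by simp) _ m).trans hasOrbitInvariants_six) .rfl
  exact ⟨e.trans (powerEquiv 2 2)⟩

end Degrees

end Crystal

open Crystal in
theorem cohomology_min142_1_2 :
    Subsingleton (H 1) ∧
    Nonempty (H 2 ≃+ ((Fin 2 → ℤ) × ZMod 8 × ZMod 4)) ∧
    Nonempty (H 3 ≃+ (Fin 2 → ℤ)) ∧
    Nonempty (H 4 ≃+ (ℤ × ZMod 8 × ZMod 4 × (Fin 2 → ZMod 2))) ∧
    Nonempty (H 5 ≃+ (Fin 2 → ZMod 2)) ∧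
    (∀ i, 6 ≤ i → Even i → Nonempty (H i ≃+ ((Fin 2 → ZMod 8) × (Fin 4 → ZMod 2)))) ∧
    (∀ i, 7 ≤ i → Odd i → Nonempty (H i ≃+ (Fin 2 → ZMod 2))) :=
  ⟨subsingleton_H_one, nonempty_H_two_addEquiv, nonempty_H_three_addEquiv,
    nonempty_H_four_addEquiv, nonempty_H_five_addEquiv,
    fun _ => nonempty_H_addEquiv_of_even, fun _ => nonempty_H_addEquiv_of_odd⟩
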